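/- arXiv:2506.23720 — 2 statements merged into one kernel-verified Lean document; each statement's English description precedes it below -/
import Mathlib

section
/- Let Ω = ∪_{i∈I}(α_i, β_i) ⊆ ℝ be a finite or countable union of pairwise disjoint open intervals (α_i ∈ [−∞,∞), β_i ∈ (−∞,∞]) with l := inf_{i∈I}(β_i − α_i) > 0, and let (U(t))_{t∈ℝ} be a strongly continuous unitary group on L²(Ω) with the integrability property. Then there exists a family of complex numbers B = (b_{i,k}), indexed by i ∈ I with α_i > −∞ and k ∈ I with β_k < ∞, such that the map (x_i)_i ↦ (Σ_i x_i b_{i,k})_k defines a unitary operator from ℓ²({i ∈ I : α_i > −∞}) onto ℓ²({k ∈ I : β_k < ∞}), and such that for every 0 < ε < l: (1) if α_i > −∞ and f ∈ L²(Ω) vanishes a.e. outside [α_i, α_i + ε], then U(ε)f = Σ_{k∈I, β_k<∞} b_{i,k} T(α_i + ε − β_k)f (the sum converging in L²(Ω), with each term supported in [β_k − ε, β_k]); (2) if β_k < ∞ and f ∈ L²(Ω) vanishes a.e. outside [β_k − ε, β_k], then U(−ε)f = Σ_{j∈I, α_j>−∞} conj(b_{j,k}) T(β_k − α_j − ε)f.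 Here (T(s)f)(x) = f(x+s) wherever x, x+s ∈ Ω, extended by zero. -/
open MeasureTheory

/-! The collar of width `ε` at a finite left endpoint consists of points whose backward path of
length `ε` leaves `Ω`. As `U ε` translates along all paths inside `Ω`, it carries this collar into
the points whose forward path leaves `Ω`, that is, into the collars at the finite right endpoints.
Since no point leaves `Ω` both on its backward path of length `s` and on its forward path of length
`r` when `r + s ≤ ε`, the part of `U ε f` in a right collar depends on `f` locally; as it is also
translation covariant in `f`, it is a constant multiple of a translate of `f`. These constants form
the matrix `B`. The normalised indicators of the right collars and the images under `U ε` of those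
of the left collars are orthonormal families that expand in each other with the coefficients of `B`
and `B*`, so `B` is unitary. -/

section

open Set Filter Topology
open scoped ComplexConjugate InnerProductSpace

section Synthesis

variable {𝕜 E ι κ : Type*} [RCLike 𝕜] [NormedAddCommGroup E] [InnerProductSpace 𝕜 E]
  {v : ι → E} {w : κ → E}

lemma mem_topologicalClosure_span_of_hasSum {c : κ → 𝕜} {x : E}
    (hx : HasSum (fun k => c k • w k) x) :
    x ∈ (Submodule.span 𝕜 (range w)).topologicalClosure :=
  mem_closure_of_tendsto hx <| .of_forall fun _ =>
    sum_mem fun k _ => Submodule.smul_mem _ _ (Submodule.subset_span (mem_range_self k))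

lemma inner_eq_of_hasSum_smul (hw : Orthonormal 𝕜 w) {c : κ → 𝕜} {x : E}
    (hx : HasSum (fun k => c k • w k) x) (k : κ) : ⟪w k, x⟫_𝕜 = c k := by
  have hinner := hx.mapL (innerSL 𝕜 (w k))
  simp only [innerSL_apply_apply, inner_smul_right] at hinner
  refine hinner.unique ?_
  convert hasSum_single k fun j hj => ?_ using 1
  · rw [inner_self_eq_norm_sq_to_K, hw.1 k, RCLike.ofReal_one, one_pow, mul_one]
  · rw [hw.2 hj.symm, mul_zero]

variable [CompleteSpace E]

/-- The synthesis operator `x ↦ ∑ i, x i • v i` of an orthonormal family `v`, as an isometry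
from `ℓ²`. -/
noncomputable def synthesis (hv : Orthonormal 𝕜 v) : lp (fun _ : ι => 𝕜) 2 →ₗᵢ[𝕜] E :=
  hv.orthogonalFamily.linearIsometry

lemma hasSum_synthesis (hv : Orthonormal 𝕜 v) (x : lp (fun _ : ι => 𝕜) 2) :
    HasSum (fun i => x i • v i) (synthesis hv x) :=
  hv.orthogonalFamily.hasSum_linearIsometry x

lemma range_synthesis (hv : Orthonormal 𝕜 v) :
    (synthesis hv).toLinearMap.range = (Submodule.span 𝕜 (range v)).topologicalClosure := by
  rw [synthesis, OrthogonalFamily.range_linearIsometry]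
  congr 1
  simp [← LinearMap.span_singleton_eq_range, ← Submodule.span_iUnion]

/-- Mutually expanding orthonormal families have the same closed span, so that the synthesis
operator of one followed by the inverse of the other is unitary. -/
lemma exists_unitary_of_hasSum_smul (hv : Orthonormal 𝕜 v) (hw : Orthonormal 𝕜 w)
    {B : ι → κ → 𝕜} {C : κ → ι → 𝕜} (hvw : ∀ i, HasSum (fun k => B i k • w k) (v i))
    (hwv : ∀ k, HasSum (fun i => C k i • v i) (w k)) :
    ∃ W : lp (fun _ : ι => 𝕜) 2 ≃ₗᵢ[𝕜] lp (fun _ : κ => 𝕜) 2,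
      ∀ x k, W x k = ∑' i, x i * B i k := by
  have hrange : (synthesis hv).toLinearMap.range = (synthesis hw).toLinearMap.range := by
    rw [range_synthesis, range_synthesis]
    refine le_antisymm ?_ ?_ <;>
      refine Submodule.topologicalClosure_minimal _ (Submodule.span_le.mpr ?_)
        (Submodule.isClosed_topologicalClosure _)
    · exact range_subset_iff.mpr fun i => mem_topologicalClosure_span_of_hasSum (hvw i)
    · exact range_subset_iff.mpr fun k => mem_topologicalClosure_span_of_hasSum (hwv k)
  let W := (synthesis hv).equivRange.trans
    ((LinearIsometryEquiv.ofEq _ _ hrange).trans (synthesis hw).equivRange.symm)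
  refine ⟨W, fun x k => ?_⟩
  have hW : synthesis hw (W x) = synthesis hv x :=
    congrArg Subtype.val ((synthesis hw).equivRange.apply_symm_apply _)
  have hinner := (hasSum_synthesis hv x).mapL (innerSL 𝕜 (w k))
  simp only [innerSL_apply_apply, inner_smul_right, inner_eq_of_hasSum_smul hw (hvw _), ← hW,
    inner_eq_of_hasSum_smul hw (hasSum_synthesis hw (W x))] at hinner
  exact hinner.tsum_eq.symm

end Synthesis

section VanishesOff

variable {X E : Type*} [MeasurableSpace X] {μ : Measure X} [NormedAddCommGroup E]
  {S T : Set X} {f : X → E}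

/-- `f` vanishes almost everywhere outside `S`: the almost-everywhere form of `support f ⊆ S`. -/
def VanishesOff {X E : Type*} [MeasurableSpace X] [Zero E] (μ : Measure X) (S : Set X)
    (f : X → E) : Prop :=
  ∀ᵐ x ∂μ, x ∉ S → f x = 0

lemma VanishesOff.mono (hf : VanishesOff μ S f) (hST : S ⊆ T) : VanishesOff μ T f := by
  filter_upwards [hf] with x hx hxT
  exact hx fun hxS => hxT (hST hxS)

lemma VanishesOff.Ioo_of_Icc {μ : Measure ℝ} [NullSingletonClass μ] {f : ℝ → E} {p q : ℝ}
    (hf : VanishesOff μ (Icc p q) f) : VanishesOff μ (Ioo p q) f := by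
  filter_upwards [hf, Measure.ae_ne μ p, Measure.ae_ne μ q] with x hx hxp hxq hxIoo
  exact hx fun hxIcc => hxIoo ⟨hxIcc.1.lt_of_ne' hxp, hxIcc.2.lt_of_ne hxq⟩

end VanishesOff

section L2

variable {X 𝕜 E : Type*} [MeasurableSpace X] {μ : Measure X} [RCLike 𝕜] [NormedAddCommGroup E]
  [InnerProductSpace 𝕜 E] {S T : Set X} {f g h : Lp E 2 μ}

lemma VanishesOff.inner_congr (hh : VanishesOff μ S h) (hfg : ∀ᵐ x ∂μ, x ∈ S → f x = g x) :
    ⟪h, f⟫_𝕜 = ⟪h, g⟫_𝕜 := by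
  simp only [L2.inner_def]
  refine integral_congr_ae ?_
  filter_upwards [hh, hfg] with x hhx hfgx
  by_cases hx : x ∈ S
  · rw [hfgx hx]
  · rw [hhx hx, inner_zero_left, inner_zero_left]

lemma VanishesOff.inner_eq_zero (hf : VanishesOff μ S f) (hg : VanishesOff μ T g)
    (hST : Disjoint S T) : ⟪f, g⟫_𝕜 = 0 := by
  rw [hf.inner_congr (g := 0), inner_zero_right]
  filter_upwards [hg, Lp.coeFn_zero E 2 μ] with x hx hx0 hxS
  rw [hx (disjoint_left.mp hST hxS), hx0, Pi.zero_apply]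

end L2

section Partition

open scoped ENNReal

lemma sum_indicator_add_indicator_iUnion_notMem {X E κ : Type*} [AddCommMonoid E] {Q : κ → Set X}
    (hdisj : Pairwise (Function.onFun Disjoint Q)) {f : X → E} {x : X}
    (hx : x ∉ ⋃ k, Q k → f x = 0) (s : Finset κ) :
    ∑ k ∈ s, (Q k).indicator f x + (⋃ k : {k // k ∉ s}, Q k).indicator f x = f x := by
  by_cases hxQ : x ∈ ⋃ k, Q k
  · obtain ⟨j, hj⟩ := mem_iUnion.mp hxQ
    have hmem (k : κ) : x ∈ Q k ↔ k = j :=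
      ⟨fun hk => by_contra fun hkj => disjoint_left.mp (hdisj hkj) hk hj, fun hk => hk ▸ hj⟩
    classical
    by_cases hjs : j ∈ s <;> simp [indicator_apply, hmem, hjs]
  · have hzero (T : Set X) : T.indicator f x = 0 := indicator_apply_eq_zero.mpr fun _ => hx hxQ
    simp only [hzero, Finset.sum_const_zero, add_zero, hx hxQ]

variable {X E κ : Type*} [MeasurableSpace X] {μ : Measure X} [NormedAddCommGroup E] [Countable κ]
  {Q : κ → Set X}

lemma tendsto_setLIntegral_iUnion_notMem (hQ : ∀ k, MeasurableSet (Q k))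
    (hdisj : Pairwise (Function.onFun Disjoint Q)) {φ : X → ℝ≥0∞} (hφ : ∫⁻ x, φ x ∂μ ≠ ∞) :
    Tendsto (fun s : Finset κ => ∫⁻ x in ⋃ k : {k // k ∉ s}, Q k, φ x ∂μ) atTop (𝓝 0) := by
  have hsum : ∑' k, ∫⁻ x in Q k, φ x ∂μ ≠ ∞ := by
    rw [← lintegral_iUnion hQ hdisj]
    exact ne_top_of_le_ne_top hφ (setLIntegral_le_lintegral _ _)
  refine (ENNReal.tendsto_tsum_compl_atTop_zero hsum).congr fun s => ?_
  refine (lintegral_iUnion (fun k : {k // k ∉ s} => hQ k) (fun j k hjk => ?_) φ).symm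
  exact hdisj (Subtype.coe_ne_coe.mpr hjk)

lemma hasSum_of_ae_eq_indicator {p : ℝ≥0∞} [Fact (1 ≤ p)] (hp : p ≠ ∞)
    (hQ : ∀ k, MeasurableSet (Q k)) (hdisj : Pairwise (Function.onFun Disjoint Q))
    {f : Lp E p μ} (hf : VanishesOff μ (⋃ k, Q k) f) {g : κ → Lp E p μ}
    (hg : ∀ k, g k =ᵐ[μ] (Q k).indicator f) : HasSum g f := by
  have hp0 : p ≠ 0 := (zero_lt_one.trans_le Fact.out).ne'
  have hsum (s : Finset κ) : ⇑(∑ k ∈ s, g k) - ⇑f =ᵐ[μ]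
      -(⋃ k : {k // k ∉ s}, Q k).indicator f := by
    filter_upwards [Lp.coeFn_finsetSum s g, (ae_all_iff.mpr hg), hf] with x hx hgx hfx
    simp only [Pi.sub_apply, hx, Finset.sum_apply, hgx, Pi.neg_apply]
    rw [← sum_indicator_add_indicator_iUnion_notMem hdisj hfx s, sub_add_cancel_left]
  have hint : ∫⁻ x, ‖f x‖ₑ ^ p.toReal ∂μ ≠ ∞ :=
    (lintegral_rpow_enorm_lt_top_of_eLpNorm_lt_top hp0 hp (Lp.eLpNorm_lt_top f)).ne
  rw [HasSum, SummationFilter.unconditional_filter, Lp.tendsto_Lp_iff_tendsto_eLpNorm']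
  have htail := (tendsto_setLIntegral_iUnion_notMem hQ hdisj hint).ennrpow_const (p.toReal)⁻¹
  rw [ENNReal.zero_rpow_of_pos (inv_pos.mpr (ENNReal.toReal_pos hp0 hp))] at htail
  refine htail.congr fun s => ?_
  rw [eLpNorm_congr_ae (hsum s), eLpNorm_neg,
    eLpNorm_indicator_eq_eLpNorm_restrict (.iUnion fun k : {k // k ∉ s} => hQ k),
    eLpNorm_eq_lintegral_rpow_enorm_toReal hp0 hp, one_div]

end Partition

/-- The Hilbert space `L²(Ω)` of complex-valued functions. -/
noncomputable abbrev LTwo (Ω : Set ℝ) := Lp ℂ 2 (volume.restrict Ω)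

lemma restrict_Ioo_ne_top (Ω : Set ℝ) (p q : ℝ) : volume.restrict Ω (Ioo p q) ≠ ⊤ :=
  ((Measure.restrict_apply_le _ _).trans_lt measure_Ioo_lt_top).ne

/-- The indicator function of the interval `(p, q)` as an element of `L²(Ω)`. -/
noncomputable def intervalIndicator (Ω : Set ℝ) (p q : ℝ) : LTwo Ω :=
  indicatorConstLp 2 measurableSet_Ioo (restrict_Ioo_ne_top Ω p q) 1

section IntervalIndicator

variable {Ω : Set ℝ} {p q r : ℝ} {f g : LTwo Ω}

lemma intervalIndicator_ae_eq (Ω : Set ℝ) (p q : ℝ) :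
    intervalIndicator Ω p q =ᵐ[volume.restrict Ω] (Ioo p q).indicator fun _ => 1 :=
  indicatorConstLp_coeFn

lemma vanishesOff_intervalIndicator (Ω : Set ℝ) (p q : ℝ) :
    VanishesOff (volume.restrict Ω) (Ioo p q) (intervalIndicator Ω p q) := by
  filter_upwards [intervalIndicator_ae_eq Ω p q] with x hx hxpq
  rw [hx, indicator_of_notMem hxpq]

lemma inner_intervalIndicator (h : Ioo p q ⊆ Ω) (f : LTwo Ω) :
    ⟪intervalIndicator Ω p q, f⟫_ℂ = ∫ x in Ioo p q, f x := by
  rw [intervalIndicator, L2.inner_indicatorConstLp_one, Measure.restrict_restrict_of_subset h]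

lemma inner_intervalIndicator_self (hpq : p ≤ q) (h : Ioo p q ⊆ Ω) :
    ⟪intervalIndicator Ω p q, intervalIndicator Ω p q⟫_ℂ = (q - p : ℝ) := by
  rw [intervalIndicator, L2.inner_indicatorConstLp_one_indicatorConstLp_one _ _
    (restrict_Ioo_ne_top _ _ _) (restrict_Ioo_ne_top _ _ _), inter_self, measureReal_def,
    Measure.restrict_apply measurableSet_Ioo, inter_eq_left.mpr h, ← measureReal_def,
    Real.volume_real_Ioo_of_le hpq]
  rfl

lemma intervalIndicator_add (hpq : p ≤ q) (hqr : q ≤ r) :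
    intervalIndicator Ω p q + intervalIndicator Ω q r = intervalIndicator Ω p r := by
  refine Lp.ext ?_
  filter_upwards [intervalIndicator_ae_eq Ω p r, intervalIndicator_ae_eq Ω p q,
    intervalIndicator_ae_eq Ω q r, Lp.coeFn_add (intervalIndicator Ω p q)
    (intervalIndicator Ω q r), Measure.ae_ne (volume.restrict Ω) q] with x hpr hpq' hqr' hadd hxq
  rw [hadd, Pi.add_apply, hpr, hpq', hqr']
  simp only [indicator_apply, mem_Ioo]
  rcases hxq.lt_or_gt with h | h
  · simp [h, h.trans_le hqr, h.not_gt]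
  · simp [h, hpq.trans_lt h, h.not_gt]

lemma integrableOn_Ioo (h : Ioo p q ⊆ Ω) (f : LTwo Ω) : IntegrableOn f (Ioo p q) := by
  have hf := integrableOn_Lp_of_measure_ne_top f fact_one_le_two_ennreal.elim
    (restrict_Ioo_ne_top Ω p q)
  rwa [IntegrableOn, Measure.restrict_restrict_of_subset h] at hf

/-- No regularity of `F` is assumed: Lebesgue differentiation provides the derivative. -/
lemma ae_eq_derivWithin_of_inner_intervalIndicator (h : Ioo p q ⊆ Ω) {F : ℝ → ℂ}
    (hF : ∀ c d, p ≤ c → c ≤ d → d ≤ q → ⟪intervalIndicator Ω c d, f⟫_ℂ = F (d - c)) :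
    ∀ᵐ x ∂volume.restrict Ω, x ∈ Ioo p q → f x = derivWithin F (Ici 0) 0 := by
  rcases le_or_gt q p with hqp | hpq
  · exact .of_forall fun x hx => absurd (hx.1.trans hx.2) hqp.not_gt
  have hfint : IntervalIntegrable f volume p q := by
    rw [intervalIntegrable_iff_integrableOn_Ioo_of_le hpq.le]
    exact integrableOn_Ioo h f
  have hprim (x : ℝ) (hx : x ∈ Ioo p q) (s : ℝ) (hs : s ∈ Ico 0 (q - x)) :
      F s = ∫ y in x..x + s, f y := by
    have hxs : x + s ≤ q := by linarith [hs.2]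
    rw [intervalIntegral.integral_of_le (by linarith [hs.1]), integral_Ioc_eq_integral_Ioo,
      ← inner_intervalIndicator ((Ioo_subset_Ioo hx.1.le hxs).trans h),
      hF x (x + s) hx.1.le (by linarith [hs.1]) hxs, add_sub_cancel_left]
  filter_upwards [ae_restrict_of_ae hfint.ae_hasDerivAt_integral] with x hx hxpq
  have hxIcc : x ∈ uIcc p q := by
    rw [uIcc_of_le hpq.le]
    exact Ioo_subset_Icc_self hxpq
  have hderiv : HasDerivAt (fun s => ∫ y in x..x + s, f y) (f x) 0 :=
    HasDerivAt.comp_const_add x 0 (by simpa only [add_zero] using hx hxIcc x hxIcc)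
  have hFderiv : HasDerivWithinAt F (f x) (Ici 0) 0 := by
    refine hderiv.hasDerivWithinAt.congr_of_eventuallyEq ?_
      (hprim x hxpq 0 ⟨le_rfl, sub_pos.mpr hxpq.2⟩)
    filter_upwards [Ico_mem_nhdsGE (sub_pos.mpr hxpq.2)] with s hs using hprim x hxpq s hs
  exact (hFderiv.derivWithin (uniqueDiffOn_Ici 0 0 self_mem_Ici)).symm

lemma ae_eq_of_inner_intervalIndicator (h : Ioo p q ⊆ Ω)
    (hfg : ∀ c d, p ≤ c → c ≤ d → d ≤ q →
      ⟪intervalIndicator Ω c d, f⟫_ℂ = ⟪intervalIndicator Ω c d, g⟫_ℂ) :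
    ∀ᵐ x ∂volume.restrict Ω, x ∈ Ioo p q → f x = g x := by
  have hzero := ae_eq_derivWithin_of_inner_intervalIndicator h (f := f - g) (F := 0)
    fun c d hc hcd hd => by rw [inner_sub_right, hfg c d hc hcd hd, sub_self, Pi.zero_apply]
  filter_upwards [hzero, Lp.coeFn_sub f g] with x hx hsub hxpq
  have hx' := hx hxpq
  rwa [derivWithin_zero, Pi.zero_apply, hsub, Pi.sub_apply, sub_eq_zero] at hx'

end IntervalIndicator

lemma orthonormal_smul_intervalIndicator {Ω : Set ℝ} {ι : Type*} {p q : ι → ℝ} {ε : ℝ}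
    (hε : 0 < ε) (hpq : ∀ i, q i - p i = ε) (hΩ : ∀ i, Ioo (p i) (q i) ⊆ Ω)
    (hdisj : Pairwise (Function.onFun Disjoint fun i => Ioo (p i) (q i))) :
    Orthonormal ℂ fun i => (((√ε)⁻¹ : ℝ) : ℂ) • intervalIndicator Ω (p i) (q i) := by
  refine ⟨fun i => ?_, fun i j hij => ?_⟩
  · have hnorm : ‖intervalIndicator Ω (p i) (q i)‖ = √ε := by
      rw [norm_eq_sqrt_re_inner (𝕜 := ℂ),
        inner_intervalIndicator_self (by linarith [hpq i]) (hΩ i), hpq]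
      rfl
    rw [norm_smul, hnorm, Complex.norm_real, norm_inv, Real.norm_of_nonneg (Real.sqrt_nonneg ε),
      inv_mul_cancel₀ (Real.sqrt_pos.mpr hε).ne']
  · beta_reduce
    rw [inner_smul_left, inner_smul_right, (vanishesOff_intervalIndicator _ _ _).inner_eq_zero
      (vanishesOff_intervalIndicator _ _ _) (hdisj hij), mul_zero, mul_zero]

section TruncTranslate

variable {Ω : Set ℝ}

lemma ae_comp_add (hΩ : MeasurableSet Ω) {P : ℝ → Prop} (h : ∀ᵐ x ∂volume.restrict Ω, P x)
    (c : ℝ) : ∀ᵐ x, x + c ∈ Ω → P (x + c) := by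
  rw [ae_restrict_iff' hΩ] at h
  exact (measurePreserving_add_right volume c).quasiMeasurePreserving.ae h

lemma memLp_indicator_comp_add (hΩ : MeasurableSet Ω) (c : ℝ) (f : LTwo Ω) :
    MemLp ({x | x + c ∈ Ω}.indicator fun x => f (x + c)) 2 (volume.restrict Ω) := by
  have hf : MemLp (Ω.indicator f) 2 volume := (memLp_indicator_iff_restrict hΩ).mpr (Lp.memLp f)
  exact (hf.comp_measurePreserving (measurePreserving_add_right volume c)).restrict Ω

/-- The translate `T(c) f` of `f ∈ L²(Ω)`, extended by zero where `x + c ∉ Ω`. -/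
noncomputable def truncTranslate (hΩ : MeasurableSet Ω) (c : ℝ) (f : LTwo Ω) : LTwo Ω :=
  (memLp_indicator_comp_add hΩ c f).toLp

lemma truncTranslate_ae_eq (hΩ : MeasurableSet Ω) (c : ℝ) (f : LTwo Ω) :
    truncTranslate hΩ c f =ᵐ[volume.restrict Ω] {x | x + c ∈ Ω}.indicator fun x => f (x + c) :=
  MemLp.coeFn_toLp _

protected lemma VanishesOff.truncTranslate (hΩ : MeasurableSet Ω) (c : ℝ) {S : Set ℝ} {f : LTwo Ω}
    (hf : VanishesOff (volume.restrict Ω) S f) :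
    VanishesOff (volume.restrict Ω) {x | x + c ∈ S} (truncTranslate hΩ c f) := by
  filter_upwards [truncTranslate_ae_eq hΩ c f, ae_restrict_of_ae (ae_comp_add hΩ hf c)]
    with x hx hfx hxS
  rw [hx]
  exact indicator_apply_eq_zero.mpr fun hxΩ => hfx hxΩ hxS

lemma truncTranslate_intervalIndicator (hΩ : MeasurableSet Ω) {c p q : ℝ}
    (h : Ioo (p + c) (q + c) ⊆ Ω) :
    truncTranslate hΩ c (intervalIndicator Ω (p + c) (q + c)) = intervalIndicator Ω p q := by
  refine Lp.ext ?_
  filter_upwards [truncTranslate_ae_eq hΩ c (intervalIndicator Ω (p + c) (q + c)),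
    intervalIndicator_ae_eq Ω p q,
    ae_restrict_of_ae (ae_comp_add hΩ (intervalIndicator_ae_eq Ω (p + c) (q + c)) c)]
    with x hT hind hshift
  have hmem : x + c ∈ Ioo (p + c) (q + c) ↔ x ∈ Ioo p q := by
    simp only [mem_Ioo, add_lt_add_iff_right]
  rw [hT, hind]
  by_cases hx : x ∈ Ioo p q
  · have hxΩ : x + c ∈ Ω := h (hmem.mpr hx)
    rw [indicator_of_mem (s := {x | x + c ∈ Ω}) hxΩ, hshift hxΩ, indicator_of_mem hx,
      indicator_of_mem (hmem.mpr hx)]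
  · rw [indicator_of_notMem hx]
    refine indicator_apply_eq_zero.mpr fun hxΩ => ?_
    rw [hshift hxΩ, indicator_of_notMem (hmem.not.mpr hx)]

lemma inner_intervalIndicator_truncTranslate (hΩ : MeasurableSet Ω) {c p q : ℝ}
    (h : Ioo p q ⊆ Ω) (h' : Ioo (p + c) (q + c) ⊆ Ω) (f : LTwo Ω) :
    ⟪intervalIndicator Ω p q, truncTranslate hΩ c f⟫_ℂ =
      ⟪intervalIndicator Ω (p + c) (q + c), f⟫_ℂ := by
  have hpre : (· + c) ⁻¹' Ioo (p + c) (q + c) = Ioo p q := by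
    rw [preimage_add_const_Ioo, add_sub_cancel_right, add_sub_cancel_right]
  rw [inner_intervalIndicator h, inner_intervalIndicator h',
    ← (measurePreserving_add_right volume c).setIntegral_preimage_emb
      (measurableEmbedding_addRight c) f (Ioo (p + c) (q + c)), hpre]
  refine integral_congr_ae ?_
  filter_upwards [ae_restrict_of_ae_restrict_of_subset h (truncTranslate_ae_eq hΩ c f),
    ae_restrict_mem measurableSet_Ioo] with x hx hxpq
  rw [hx, indicator_of_mem (s := {x | x + c ∈ Ω})]
  exact h' (by rwa [← hpre] at hxpq)

lemma hasSum_smul_truncTranslate (hΩ : MeasurableSet Ω) {κ : Type*} [Countable κ] {Q : κ → Set ℝ}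
    (hQ : ∀ k, MeasurableSet (Q k)) (hdisj : Pairwise (Function.onFun Disjoint Q))
    {S : Set ℝ} {c : κ → ℝ} (hS : ∀ k x, x + c k ∈ S → x ∈ Q k) {z : κ → ℂ} {f h : LTwo Ω}
    (hf : VanishesOff (volume.restrict Ω) S f) (hh : VanishesOff (volume.restrict Ω) (⋃ k, Q k) h)
    (hhQ : ∀ k, ∀ᵐ x ∂volume.restrict Ω, x ∈ Q k →
      h x = (z k • truncTranslate hΩ (c k) f) x) :
    HasSum (fun k => z k • truncTranslate hΩ (c k) f) h := by
  refine hasSum_of_ae_eq_indicator (by simp) hQ hdisj hh fun k => ?_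
  filter_upwards [hhQ k, (hf.truncTranslate hΩ (c k)).mono (hS k),
    Lp.coeFn_smul (z k) (truncTranslate hΩ (c k) f)] with x hhx hfx hsmul
  by_cases hx : x ∈ Q k
  · rw [indicator_of_mem hx, hhx hx]
  · rw [indicator_of_notMem hx, hsmul, Pi.smul_apply, hfx hx, smul_zero]

end TruncTranslate

/-- A unitary group on `L²(Ω)` acting as translation as long as no path leaves `Ω`: the global form
of the integrability property. -/
structure IsTranslationGroup (Ω : Set ℝ) (U : ℝ → (LTwo Ω ≃ₗᵢ[ℂ] LTwo Ω)) : Prop where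
  zero : ∀ f, U 0 f = f
  add : ∀ s t f, U (s + t) f = U s (U t f)
  shift : ∀ t f, ∀ᵐ x ∂volume.restrict Ω, uIcc x (x + t) ⊆ Ω → U t f x = f (x + t)

/-- The points of `Ω` whose path of length `t` does not stay inside `Ω`. -/
def exitSet (Ω : Set ℝ) (t : ℝ) : Set ℝ := {x ∈ Ω | ¬ uIcc x (x + t) ⊆ Ω}

section Integrability

open Metric

variable {Ω V : Set ℝ} {U : ℝ → (LTwo Ω ≃ₗᵢ[ℂ] LTwo Ω)}

lemma iterate_shift_ae (hU0 : ∀ f, U 0 f = f) (hUadd : ∀ s t f, U (s + t) f = U s (U t f)) {s : ℝ}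
    (hV : ∀ f, ∀ᵐ x, x ∈ V → U s f x = f (x + s)) (f : LTwo Ω) (n : ℕ) :
    ∀ᵐ x, (∀ j < n, x + j * s ∈ V) → U (n * s) f x = f (x + n * s) := by
  induction n with
  | zero => simp [hU0]
  | succ n ih =>
    have hsucc (m : ℕ) : ((m + 1 : ℕ) : ℝ) * s = s + m * s := by push_cast; ring
    rw [hsucc, hUadd]
    filter_upwards [hV (U (n * s) f),
      (measurePreserving_add_right volume s).quasiMeasurePreserving.ae ih] with x hxs hxn hx
    rw [hxs (by simpa using hx 0 n.succ_pos), hxn fun j hj => ?_, add_assoc]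
    rw [add_assoc, ← hsucc]
    exact hx (j + 1) (Nat.succ_lt_succ hj)

lemma exists_nat_uIcc_disjoint_cthickening (hΩ : IsOpen Ω) {x y : ℝ} (h : uIcc x y ⊆ Ω) (r : ℝ) :
    ∃ n : ℕ, 0 < n ∧ Disjoint (uIcc x y) (cthickening (r / n) Ωᶜ) := by
  obtain ⟨δ, hδ, hdisj⟩ := (disjoint_compl_right_iff_subset.mpr h).exists_cthickenings
    isCompact_uIcc hΩ.isClosed_compl
  obtain ⟨n, hn⟩ := exists_nat_gt (max 0 (r / δ))
  have hn0 : (0 : ℝ) < n := (le_max_left _ _).trans_lt hn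
  have hrn : r / n ≤ δ := (div_le_comm₀ hδ hn0).mp ((le_max_right _ _).trans hn.le)
  exact ⟨n, Nat.cast_pos.mp hn0,
    hdisj.mono (self_subset_cthickening _) (cthickening_mono hrn _)⟩

lemma add_natCast_mul_div_mem_uIcc (x t : ℝ) {j n : ℕ} (hj : j ≤ n) :
    x + j * (t / n) ∈ uIcc x (x + t) := by
  rw [← segment_eq_uIcc, segment_eq_image']
  refine ⟨j / n, ⟨by positivity, div_le_one_of_le₀ (Nat.cast_le.mpr hj) n.cast_nonneg⟩, ?_⟩
  simp only [add_sub_cancel_left, smul_eq_mul]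
  ring

/-- A path inside `Ω` stays at distance more than `|t| / n` from `Ωᶜ` for large `n`, so that
`U (t / n)` can be iterated along it. -/
lemma isTranslationGroup_of_integrability (hΩ : IsOpen Ω) (hU0 : ∀ f, U 0 f = f)
    (hUadd : ∀ s t f, U (s + t) f = U s (U t f))
    (hInt : ∀ V : Set ℝ, IsOpen V → V ⊆ Ω → ∀ δ : ℝ, 0 < δ →
      (∀ s : ℝ, |s| < δ → (fun x => x + s) '' V ⊆ Ω) →
      ∀ s : ℝ, |s| < δ → ∀ f, ∀ᵐ x ∂volume.restrict V, U s f x = f (x + s)) :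
    IsTranslationGroup Ω U := by
  refine ⟨hU0, hUadd, fun t f => ?_⟩
  have hlocal (n : ℕ) (hn : 0 < n) :
      ∀ g, ∀ᵐ x, x ∈ (cthickening ((|t| + 1) / n) Ωᶜ)ᶜ → U (t / n) g x = g (x + t / n) := by
    have hn' : (0 : ℝ) < n := Nat.cast_pos.mpr hn
    intro g
    rw [← ae_restrict_iff' isClosed_cthickening.isOpen_compl.measurableSet]
    refine hInt _ isClosed_cthickening.isOpen_compl
      (compl_subset_comm.mp (self_subset_cthickening _)) ((|t| + 1) / n) (by positivity) ?_ _ ?_ g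
    · rintro s hs _ ⟨x, hx, rfl⟩
      refine by_contra fun hxs => hx (mem_cthickening_of_dist_le x (x + s) _ _ hxs ?_)
      simpa using hs.le
    · rw [abs_div, Nat.abs_cast]
      exact div_lt_div_of_pos_right (lt_add_one _) hn'
  have hiter : ∀ᵐ x, ∀ n : ℕ, 0 < n →
      (∀ j < n, x + j * (t / n) ∈ (cthickening ((|t| + 1) / n) Ωᶜ)ᶜ) →
        U (n * (t / n)) f x = f (x + n * (t / n)) :=
    ae_all_iff.mpr fun n => eventually_imp_distrib_left.mpr fun hn =>
      iterate_shift_ae hU0 hUadd (hlocal n hn) f n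
  filter_upwards [ae_restrict_of_ae hiter] with x hx hxt
  obtain ⟨n, hn, hdisj⟩ := exists_nat_uIcc_disjoint_cthickening hΩ hxt (|t| + 1)
  rw [← mul_div_cancel₀ t (Nat.cast_pos (α := ℝ).mpr hn).ne']
  exact hx n hn fun j hj => disjoint_left.mp hdisj (add_natCast_mul_div_mem_uIcc x t hj.le)

end Integrability

namespace IsTranslationGroup

variable {Ω : Set ℝ} {U : ℝ → (LTwo Ω ≃ₗᵢ[ℂ] LTwo Ω)}

lemma apply_apply_neg (hU : IsTranslationGroup Ω U) (t : ℝ) (f : LTwo Ω) :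
    U t (U (-t) f) = f := by
  rw [← hU.add, add_neg_cancel, hU.zero]

lemma inner_apply (hU : IsTranslationGroup Ω U) (t : ℝ) (f g : LTwo Ω) :
    ⟪f, U t g⟫_ℂ = ⟪U (-t) f, g⟫_ℂ := by
  rw [← (U t).inner_map_map (U (-t) f) g, hU.apply_apply_neg]

lemma vanishesOff_exitSet (hU : IsTranslationGroup Ω U) (hΩ : MeasurableSet Ω) {t : ℝ}
    {f : LTwo Ω} (hf : VanishesOff (volume.restrict Ω) (exitSet Ω (-t)) f) :
    VanishesOff (volume.restrict Ω) (exitSet Ω t) (U t f) := by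
  filter_upwards [hU.shift t f, ae_restrict_of_ae (ae_comp_add hΩ hf t), ae_restrict_mem hΩ]
    with x hshift hfx hxΩ hx
  have hpath : uIcc x (x + t) ⊆ Ω := by_contra fun hpath => hx ⟨hxΩ, hpath⟩
  rw [hshift hpath]
  refine hfx (hpath right_mem_uIcc) fun hexit => hexit.2 ?_
  rwa [add_neg_cancel_right, uIcc_comm]

lemma apply_intervalIndicator (hU : IsTranslationGroup Ω U) (hΩ : MeasurableSet Ω) {p q t : ℝ}
    (hpq : p ≤ q) (h : ∀ x ∈ Ioo p q, uIcc x (x + t) ⊆ Ω) :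
    U t (intervalIndicator Ω (p + t) (q + t)) = intervalIndicator Ω p q := by
  have hsub : Ioo p q ⊆ Ω := fun x hx => h x hx left_mem_uIcc
  have hsub' : Ioo (p + t) (q + t) ⊆ Ω := fun x hx => by
    have hx' : x - t ∈ Ioo p q := ⟨by linarith [hx.1], by linarith [hx.2]⟩
    simpa using h (x - t) hx' right_mem_uIcc
  set u := U t (intervalIndicator Ω (p + t) (q + t)) with hu
  set v := intervalIndicator Ω p q with hv
  -- `u` agrees with `v` on `(p, q)` and has the same norm, so nothing is left of it elsewhere
  have huu : ⟪u, u⟫_ℂ = ⟪v, v⟫_ℂ := by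
    rw [hu, (U t).inner_map_map, hv, inner_intervalIndicator_self hpq hsub,
      inner_intervalIndicator_self (add_le_add_left hpq t) hsub', add_sub_add_right_eq_sub]
  have hvu : ⟪v, u⟫_ℂ = ⟪v, v⟫_ℂ := by
    refine (vanishesOff_intervalIndicator Ω p q).inner_congr ?_
    rw [hv, ← truncTranslate_intervalIndicator hΩ hsub']
    filter_upwards [hU.shift t (intervalIndicator Ω (p + t) (q + t)),
      truncTranslate_ae_eq hΩ t (intervalIndicator Ω (p + t) (q + t))] with x hshift hT hx
    rw [hshift (h x hx), hT, indicator_of_mem (s := {x | x + t ∈ Ω}) (h x hx right_mem_uIcc)]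
  have huv : ⟪u, v⟫_ℂ = ⟪v, v⟫_ℂ := by rw [← inner_conj_symm, hvu, inner_self_conj]
  rw [← sub_eq_zero, ← inner_self_eq_zero (𝕜 := ℂ), inner_sub_sub_self, huu, huv, hvu, sub_self,
    zero_sub, neg_add_cancel]

end IsTranslationGroup

/-- The families `a` and `b` enumerate the finite left and right endpoints of the components of the
open set `Ω`, all of which are longer than `ε`. -/
structure HasEndpoints {A K : Type*} (Ω : Set ℝ) (ε : ℝ) (a : A → ℝ) (b : K → ℝ) : Prop where
  isOpen : IsOpen Ω
  pos : 0 < ε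
  left_injective : Function.Injective a
  right_injective : Function.Injective b
  left_notMem : ∀ i, a i ∉ Ω
  right_notMem : ∀ k, b k ∉ Ω
  left_subset : ∀ i, Ioc (a i) (a i + ε) ⊆ Ω
  right_subset : ∀ k, Ico (b k - ε) (b k) ⊆ Ω
  exitSet_neg_subset : exitSet Ω (-ε) ⊆ ⋃ i, Ioc (a i) (a i + ε)
  exitSet_subset : exitSet Ω ε ⊆ ⋃ k, Ico (b k - ε) (b k)

/-- The part of a signal entering at the left endpoint `a` that arrives at the right endpoint `b`
by the time `s` it takes to enter. -/
noncomputable def boundaryPairing {Ω : Set ℝ} (U : ℝ → (LTwo Ω ≃ₗᵢ[ℂ] LTwo Ω)) (a b s : ℝ) : ℂ :=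
  ⟪intervalIndicator Ω (b - s) b, U s (intervalIndicator Ω a (a + s))⟫_ℂ

/-- The coefficient with which a signal passes from the left endpoint `a` to the right endpoint
`b`: the right derivative at `0` of `boundaryPairing U a b`, which is linear for short times. -/
noncomputable def transitionCoeff {Ω : Set ℝ} (U : ℝ → (LTwo Ω ≃ₗᵢ[ℂ] LTwo Ω)) (a b : ℝ) : ℂ :=
  derivWithin (boundaryPairing U a b) (Ici 0) 0

namespace HasEndpoints

variable {A K : Type*} {Ω : Set ℝ} {ε : ℝ} {a : A → ℝ} {b : K → ℝ}

lemma measurableSet (hab : HasEndpoints Ω ε a b) : MeasurableSet Ω :=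
  hab.isOpen.measurableSet

lemma Ioo_left_subset (hab : HasEndpoints Ω ε a b) (i : A) : Ioo (a i) (a i + ε) ⊆ Ω :=
  Ioo_subset_Ioc_self.trans (hab.left_subset i)

lemma Ioo_right_subset (hab : HasEndpoints Ω ε a b) (k : K) : Ioo (b k - ε) (b k) ⊆ Ω :=
  Ioo_subset_Ico_self.trans (hab.right_subset k)

lemma pairwise_disjoint_left (hab : HasEndpoints Ω ε a b) :
    Pairwise (Function.onFun Disjoint fun i => Ioo (a i) (a i + ε)) := by
  intro i j hij
  wlog hlt : a i < a j generalizing i j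
  · exact (this hij.symm ((not_lt.mp hlt).lt_of_ne (hab.left_injective.ne hij.symm))).symm
  refine disjoint_left.mpr fun x hxi hxj => hab.left_notMem j (hab.Ioo_left_subset i ?_)
  exact ⟨hlt, hxj.1.trans hxi.2⟩

lemma pairwise_disjoint_right (hab : HasEndpoints Ω ε a b) :
    Pairwise (Function.onFun Disjoint fun k => Ioo (b k - ε) (b k)) := by
  intro j k hjk
  wlog hlt : b j < b k generalizing j k
  · exact (this hjk.symm ((not_lt.mp hlt).lt_of_ne (hab.right_injective.ne hjk.symm))).symm
  refine disjoint_left.mpr fun x hxj hxk => hab.right_notMem j (hab.Ioo_right_subset k ?_)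
  exact ⟨hxk.1.trans hxj.2, hlt⟩

lemma Ioo_left_subset_exitSet (hab : HasEndpoints Ω ε a b) (i : A) {s : ℝ} (hs : s ≤ ε) :
    Ioo (a i) (a i + s) ⊆ exitSet Ω (-s) := by
  refine fun x hx => ⟨hab.Ioo_left_subset i ⟨hx.1, by linarith [hx.2]⟩, fun hpath => ?_⟩
  exact hab.left_notMem i (hpath (mem_uIcc_of_ge (by linarith [hx.2]) hx.1.le))

lemma Ioo_right_subset_exitSet (hab : HasEndpoints Ω ε a b) (k : K) {r : ℝ} (hr : r ≤ ε) :
    Ioo (b k - r) (b k) ⊆ exitSet Ω r := by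
  refine fun x hx => ⟨hab.Ioo_right_subset k ⟨by linarith [hx.1], hx.2⟩, fun hpath => ?_⟩
  exact hab.right_notMem k (hpath (mem_uIcc_of_le hx.2.le (by linarith [hx.1])))

lemma exists_left_of_mem_exitSet (hab : HasEndpoints Ω ε a b) {x s : ℝ} (hs : 0 ≤ s) (hsε : s ≤ ε)
    (hx : x ∈ exitSet Ω (-s)) : ∃ i, a i < x ∧ x ≤ a i + s := by
  have hpath : uIcc x (x + -s) ⊆ uIcc x (x + -ε) := by
    rw [uIcc_of_ge (by linarith), uIcc_of_ge (by linarith [hab.pos])]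
    exact Icc_subset_Icc_left (by linarith)
  obtain ⟨i, hi⟩ := mem_iUnion.mp (hab.exitSet_neg_subset ⟨hx.1, fun h => hx.2 (hpath.trans h)⟩)
  refine ⟨i, hi.1, not_lt.mp fun hlt => hx.2 ?_⟩
  rw [uIcc_of_ge (by linarith)]
  exact (Icc_subset_Ioc (by linarith) hi.2).trans (hab.left_subset i)

lemma exists_right_of_mem_exitSet (hab : HasEndpoints Ω ε a b) {x r : ℝ} (hr : 0 ≤ r) (hrε : r ≤ ε)
    (hx : x ∈ exitSet Ω r) : ∃ k, b k - r ≤ x ∧ x < b k := by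
  have hpath : uIcc x (x + r) ⊆ uIcc x (x + ε) := by
    rw [uIcc_of_le (by linarith), uIcc_of_le (by linarith [hab.pos])]
    exact Icc_subset_Icc_right (by linarith)
  obtain ⟨k, hk⟩ := mem_iUnion.mp (hab.exitSet_subset ⟨hx.1, fun h => hx.2 (hpath.trans h)⟩)
  refine ⟨k, not_lt.mp fun hlt => hx.2 ?_, hk.2⟩
  rw [uIcc_of_le (by linarith)]
  exact (Icc_subset_Ico_iff (by linarith)).mpr ⟨hk.1, by linarith⟩ |>.trans (hab.right_subset k)

lemma disjoint_exitSet (hab : HasEndpoints Ω ε a b) {r s : ℝ} (hr : 0 ≤ r) (hs : 0 ≤ s)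
    (hrs : r + s ≤ ε) : Disjoint (exitSet Ω r) (exitSet Ω (-s)) := by
  refine disjoint_left.mpr fun x hxr hxs => ?_
  obtain ⟨k, hkx, hxk⟩ := hab.exists_right_of_mem_exitSet hr (by linarith) hxr
  obtain ⟨i, hix, hxi⟩ := hab.exists_left_of_mem_exitSet hs (by linarith) hxs
  exact hab.right_notMem k (hab.left_subset i ⟨hix.trans hxk, by linarith⟩)

section Pairing

variable {U : ℝ → (LTwo Ω ≃ₗᵢ[ℂ] LTwo Ω)} {c d c' d' : ℝ}

lemma apply_left (hab : HasEndpoints Ω ε a b) (hU : IsTranslationGroup Ω U) (i : A) (hc : 0 ≤ c)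
    (hcd : c ≤ d) (hd : d ≤ ε) :
    U c (intervalIndicator Ω (a i + c) (a i + d)) = intervalIndicator Ω (a i) (a i + (d - c)) := by
  have hd' : a i + d = a i + (d - c) + c := by ring
  rw [hd', hU.apply_intervalIndicator hab.measurableSet (by linarith)]
  intro x hx
  rw [uIcc_of_le (by linarith)]
  exact (Icc_subset_Ioc hx.1 (by linarith [hx.2])).trans (hab.left_subset i)

lemma apply_right (hab : HasEndpoints Ω ε a b) (hU : IsTranslationGroup Ω U) (k : K) {e : ℝ}
    (hc : 0 ≤ c) (hcd : c ≤ d) (hd : d ≤ e) (he : e ≤ ε) :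
    U (-(ε - e)) (intervalIndicator Ω (b k - ε + c) (b k - ε + d)) =
      intervalIndicator Ω (b k - e + c) (b k - e + d) := by
  have hshift (x : ℝ) : b k - ε + x = b k - e + x + -(ε - e) := by ring
  rw [hshift, hshift, hU.apply_intervalIndicator hab.measurableSet (by linarith)]
  intro x hx
  rw [uIcc_of_ge (by linarith)]
  exact fun y hy => hab.right_subset k ⟨by linarith [hx.1, hy.1], by linarith [hx.2, hy.2]⟩

lemma inner_apply_eq_zero_of_le (hab : HasEndpoints Ω ε a b) (hU : IsTranslationGroup Ω U) (i : A)
    (k : K) (hc : 0 ≤ c) (hcd : c ≤ d) (hdc' : d ≤ c') (hcd' : c' ≤ d') (hd' : d' ≤ ε) :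
    ⟪intervalIndicator Ω (b k - ε + c') (b k - ε + d'),
      U ε (intervalIndicator Ω (a i + c) (a i + d))⟫_ℂ = 0 := by
  have hf : VanishesOff (volume.restrict Ω) (exitSet Ω (-d))
      (intervalIndicator Ω (a i + c) (a i + d)) :=
    (vanishesOff_intervalIndicator _ _ _).mono <|
      (Ioo_subset_Ioo_left (by linarith)).trans (hab.Ioo_left_subset_exitSet i (by linarith))
  have hg : VanishesOff (volume.restrict Ω) (exitSet Ω (- -(ε - d)))
      (intervalIndicator Ω (b k - ε + c') (b k - ε + d')) := by
    rw [neg_neg]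
    exact (vanishesOff_intervalIndicator _ _ _).mono <|
      (Ioo_subset_Ioo (by linarith) (by linarith)).trans
        (hab.Ioo_right_subset_exitSet k (by linarith))
  have hsplit (f : LTwo Ω) : U ε f = U (ε - d) (U d f) := by rw [← hU.add, sub_add_cancel]
  rw [hsplit, hU.inner_apply]
  exact (hU.vanishesOff_exitSet hab.measurableSet hg).inner_eq_zero
    (hU.vanishesOff_exitSet hab.measurableSet hf)
    (hab.disjoint_exitSet (by linarith) (by linarith) (by linarith)).symm

lemma inner_apply_eq_zero_of_ge (hab : HasEndpoints Ω ε a b) (hU : IsTranslationGroup Ω U) (i : A)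
    (k : K) (hc' : 0 ≤ c') (hcd' : c' ≤ d') (hdc : d' ≤ c) (hcd : c ≤ d) (hd : d ≤ ε) :
    ⟪intervalIndicator Ω (b k - ε + c') (b k - ε + d'),
      U ε (intervalIndicator Ω (a i + c) (a i + d))⟫_ℂ = 0 := by
  have hsplit (f : LTwo Ω) : U ε f = U (ε - c) (U c f) := by rw [← hU.add, sub_add_cancel]
  rw [hsplit, hU.inner_apply, hab.apply_left hU i (by linarith) hcd hd,
    hab.apply_right hU k hc' hcd' hdc (by linarith)]
  refine (vanishesOff_intervalIndicator _ _ _).inner_eq_zero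
    (vanishesOff_intervalIndicator _ _ _) ?_
  refine (hab.disjoint_exitSet (r := c - c') (s := d - c) (by linarith) (by linarith)
    (by linarith)).mono ?_ (hab.Ioo_left_subset_exitSet i (by linarith))
  exact (Ioo_subset_Ioo (by linarith) (by linarith)).trans
    (hab.Ioo_right_subset_exitSet k (by linarith))

lemma inner_apply_eq_boundaryPairing (hab : HasEndpoints Ω ε a b) (hU : IsTranslationGroup Ω U)
    (i : A) (k : K) (hc : 0 ≤ c) (hcd : c ≤ d) (hd : d ≤ ε) :
    ⟪intervalIndicator Ω (b k - ε + c) (b k - ε + d),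
      U ε (intervalIndicator Ω (a i + c) (a i + d))⟫_ℂ =
      boundaryPairing U (a i) (b k) (d - c) := by
  have hsplit (f : LTwo Ω) : U ε f = U (ε - d) (U (d - c) (U c f)) := by
    rw [← hU.add, ← hU.add, sub_add_sub_cancel, sub_add_cancel]
  rw [hsplit, hU.inner_apply, hab.apply_left hU i hc hcd hd,
    hab.apply_right hU k hc hcd le_rfl hd, sub_add_cancel, sub_add, boundaryPairing]

lemma inner_apply_eq_boundaryPairing_of_subinterval (hab : HasEndpoints Ω ε a b)
    (hU : IsTranslationGroup Ω U) (i : A) (k : K) (hc : 0 ≤ c) (hcc' : c ≤ c') (hcd' : c' ≤ d')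
    (hdd' : d' ≤ d) (hd : d ≤ ε) :
    ⟪intervalIndicator Ω (b k - ε + c') (b k - ε + d'),
      U ε (intervalIndicator Ω (a i + c) (a i + d))⟫_ℂ =
      boundaryPairing U (a i) (b k) (d' - c') := by
  rw [← intervalIndicator_add (p := a i + c) (q := a i + d') (by linarith) (by linarith),
    ← intervalIndicator_add (p := a i + c) (q := a i + c') (by linarith) (by linarith), map_add,
    map_add, inner_add_right, inner_add_right,
    hab.inner_apply_eq_zero_of_le hU i k hc hcc' le_rfl hcd' (by linarith),
    hab.inner_apply_eq_boundaryPairing hU i k (by linarith) hcd' (by linarith),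
    hab.inner_apply_eq_zero_of_ge hU i k (by linarith) hcd' le_rfl hdd' hd, zero_add, add_zero]

end Pairing

section Transition

variable {U : ℝ → (LTwo Ω ≃ₗᵢ[ℂ] LTwo Ω)} {c d : ℝ} {f : LTwo Ω}

lemma ae_eq_right_of_inner (hab : HasEndpoints Ω ε a b) (k : K) (hc : 0 ≤ c) (hd : d ≤ ε)
    {g : LTwo Ω}
    (hfg : ∀ c' d', c ≤ c' → c' ≤ d' → d' ≤ d →
      ⟪intervalIndicator Ω (b k - ε + c') (b k - ε + d'), f⟫_ℂ =
        ⟪intervalIndicator Ω (b k - ε + c') (b k - ε + d'), g⟫_ℂ) :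
    ∀ᵐ x ∂volume.restrict Ω, x ∈ Ioo (b k - ε + c) (b k - ε + d) → f x = g x := by
  have hsub : Ioo (b k - ε + c) (b k - ε + d) ⊆ Ω :=
    (Ioo_subset_Ioo (by linarith) (by linarith)).trans (hab.Ioo_right_subset k)
  refine ae_eq_of_inner_intervalIndicator hsub fun p q hp hpq hq => ?_
  have hfg' := hfg (p - (b k - ε)) (q - (b k - ε)) (by linarith) (by linarith) (by linarith)
  rwa [add_sub_cancel, add_sub_cancel] at hfg'

lemma apply_intervalIndicator_eq_zero_of_lt (hab : HasEndpoints Ω ε a b)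
    (hU : IsTranslationGroup Ω U) (i : A) (k : K) (hcd : c ≤ d) (hd : d ≤ ε) :
    ∀ᵐ x ∂volume.restrict Ω, x ∈ Ioo (b k - ε) (b k - ε + c) →
      U ε (intervalIndicator Ω (a i + c) (a i + d)) x = 0 := by
  have hzero := hab.ae_eq_right_of_inner k le_rfl (hcd.trans hd) (g := 0)
    fun c' d' hc' hcd' hd' => by
      rw [hab.inner_apply_eq_zero_of_ge hU i k hc' hcd' hd' hcd hd, inner_zero_right]
  filter_upwards [hzero, Lp.coeFn_zero ℂ 2 (volume.restrict Ω)] with x hx hx0 hxc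
  rw [hx (by rwa [add_zero]), hx0, Pi.zero_apply]

lemma apply_intervalIndicator_eq_zero_of_gt (hab : HasEndpoints Ω ε a b)
    (hU : IsTranslationGroup Ω U) (i : A) (k : K) (hc : 0 ≤ c) (hcd : c ≤ d) :
    ∀ᵐ x ∂volume.restrict Ω, x ∈ Ioo (b k - ε + d) (b k) →
      U ε (intervalIndicator Ω (a i + c) (a i + d)) x = 0 := by
  have hzero := hab.ae_eq_right_of_inner k (hc.trans hcd) le_rfl (g := 0)
    fun c' d' hc' hcd' hd' => by
      rw [hab.inner_apply_eq_zero_of_le hU i k hc hcd hc' hcd' hd', inner_zero_right]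
  filter_upwards [hzero, Lp.coeFn_zero ℂ 2 (volume.restrict Ω)] with x hx hx0 hxd
  rw [hx (by rwa [sub_add_cancel]), hx0, Pi.zero_apply]

lemma apply_intervalIndicator_eq_transitionCoeff (hab : HasEndpoints Ω ε a b)
    (hU : IsTranslationGroup Ω U) (i : A) (k : K) (hc : 0 ≤ c) (hd : d ≤ ε) :
    ∀ᵐ x ∂volume.restrict Ω, x ∈ Ioo (b k - ε + c) (b k - ε + d) →
      U ε (intervalIndicator Ω (a i + c) (a i + d)) x = transitionCoeff U (a i) (b k) := by
  refine ae_eq_derivWithin_of_inner_intervalIndicator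
    ((Ioo_subset_Ioo (by linarith) (by linarith)).trans (hab.Ioo_right_subset k))
    fun p q hp hpq hq => ?_
  have hinner := hab.inner_apply_eq_boundaryPairing_of_subinterval hU i k (c := c) (d := d)
    (c' := p - (b k - ε)) (d' := q - (b k - ε)) hc (by linarith) (by linarith) (by linarith) hd
  rwa [add_sub_cancel, add_sub_cancel, sub_sub_sub_cancel_right] at hinner

lemma apply_intervalIndicator_ae_eq (hab : HasEndpoints Ω ε a b) (hU : IsTranslationGroup Ω U)
    (i : A) (k : K) (hc : 0 ≤ c) (hcd : c ≤ d) (hd : d ≤ ε) :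
    ∀ᵐ x ∂volume.restrict Ω, x ∈ Ioo (b k - ε) (b k) →
      U ε (intervalIndicator Ω (a i + c) (a i + d)) x =
        (transitionCoeff U (a i) (b k) • intervalIndicator Ω (b k - ε + c) (b k - ε + d)) x := by
  filter_upwards [hab.apply_intervalIndicator_eq_zero_of_lt hU i k hcd hd,
    hab.apply_intervalIndicator_eq_transitionCoeff hU i k hc hd,
    hab.apply_intervalIndicator_eq_zero_of_gt hU i k hc hcd,
    intervalIndicator_ae_eq Ω (b k - ε + c) (b k - ε + d),
    Lp.coeFn_smul (transitionCoeff U (a i) (b k))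
      (intervalIndicator Ω (b k - ε + c) (b k - ε + d)),
    Measure.ae_ne (volume.restrict Ω) (b k - ε + c),
    Measure.ae_ne (volume.restrict Ω) (b k - ε + d)]
    with x hlt hmid hgt hind hsmul hxc hxd hx
  rw [hsmul, Pi.smul_apply, hind, smul_eq_mul]
  rcases hxc.lt_or_gt with h | h
  · rw [hlt ⟨hx.1, h⟩, indicator_of_notMem fun hmem => h.not_gt hmem.1, mul_zero]
  rcases hxd.lt_or_gt with h' | h'
  · rw [hmid ⟨h, h'⟩, indicator_of_mem (mem_Ioo.mpr ⟨h, h'⟩), mul_one]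
  · rw [hgt ⟨h', hx.2⟩, indicator_of_notMem fun hmem => h'.not_gt hmem.2, mul_zero]

lemma apply_neg_ae_eq (hab : HasEndpoints Ω ε a b) (hU : IsTranslationGroup Ω U) (i : A) (k : K)
    (hf : VanishesOff (volume.restrict Ω) (Ioo (b k - ε) (b k)) f) :
    ∀ᵐ x ∂volume.restrict Ω, x ∈ Ioo (a i) (a i + ε) → U (-ε) f x =
      (conj (transitionCoeff U (a i) (b k)) •
        truncTranslate hab.measurableSet (b k - a i - ε) f) x := by
  refine ae_eq_of_inner_intervalIndicator (hab.Ioo_left_subset i) fun p q hp hpq hq => ?_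
  obtain ⟨c, rfl⟩ : ∃ c, p = a i + c := ⟨p - a i, by ring⟩
  obtain ⟨d, rfl⟩ : ∃ d, q = a i + d := ⟨q - a i, by ring⟩
  have hshift (x : ℝ) : a i + x + (b k - a i - ε) = b k - ε + x := by ring
  rw [hU.inner_apply, neg_neg, ← inner_conj_symm, hf.inner_congr
    (hab.apply_intervalIndicator_ae_eq hU i k (by linarith) (by linarith) (by linarith)),
    inner_conj_symm, inner_smul_left, inner_smul_right, inner_intervalIndicator_truncTranslate,
    hshift, hshift]
  · exact (Ioo_subset_Ioo hp hq).trans (hab.Ioo_left_subset i)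
  · rw [hshift, hshift]
    exact (Ioo_subset_Ioo (by linarith) (by linarith)).trans (hab.Ioo_right_subset k)

lemma apply_ae_eq (hab : HasEndpoints Ω ε a b) (hU : IsTranslationGroup Ω U) (i : A) (k : K)
    (hf : VanishesOff (volume.restrict Ω) (Ioo (a i) (a i + ε)) f) :
    ∀ᵐ x ∂volume.restrict Ω, x ∈ Ioo (b k - ε) (b k) → U ε f x =
      (transitionCoeff U (a i) (b k) •
        truncTranslate hab.measurableSet (a i + ε - b k) f) x := by
  refine ae_eq_of_inner_intervalIndicator (hab.Ioo_right_subset k) fun p q hp hpq hq => ?_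
  have hpq' : Ioo p q ⊆ Ioo (b k - ε) (b k) := Ioo_subset_Ioo hp hq
  obtain ⟨c, rfl⟩ : ∃ c, p = c + (b k - a i - ε) := ⟨p - (b k - a i - ε), by ring⟩
  obtain ⟨d, rfl⟩ : ∃ d, q = d + (b k - a i - ε) := ⟨q - (b k - a i - ε), by ring⟩
  have hcd := hpq'.trans (hab.Ioo_right_subset k)
  have hshift (x : ℝ) : x + (b k - a i - ε) + (a i + ε - b k) = x := by ring
  have hsub : Ioo c d ⊆ Ω :=
    (Ioo_subset_Ioo (by linarith) (by linarith)).trans (hab.Ioo_left_subset i)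
  rw [hU.inner_apply, ← inner_conj_symm, hf.inner_congr (hab.apply_neg_ae_eq hU i k
      ((vanishesOff_intervalIndicator _ _ _).mono hpq')), inner_conj_symm,
    truncTranslate_intervalIndicator hab.measurableSet hcd, inner_smul_left, inner_smul_right,
    Complex.conj_conj, inner_intervalIndicator_truncTranslate hab.measurableSet hcd, hshift, hshift]
  rwa [hshift, hshift]

end Transition

section Expansion

variable {U : ℝ → (LTwo Ω ≃ₗᵢ[ℂ] LTwo Ω)} {f : LTwo Ω}

lemma vanishesOff_apply [Countable K] (hab : HasEndpoints Ω ε a b) (hU : IsTranslationGroup Ω U)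
    (i : A) (hf : VanishesOff (volume.restrict Ω) (Ioo (a i) (a i + ε)) f) :
    VanishesOff (volume.restrict Ω) (⋃ k, Ioo (b k - ε) (b k)) (U ε f) := by
  filter_upwards [hU.vanishesOff_exitSet hab.measurableSet
      (hf.mono (hab.Ioo_left_subset_exitSet i le_rfl)),
    ae_all_iff.mpr fun k => Measure.ae_ne (volume.restrict Ω) (b k - ε)] with x hx hne hxb
  refine hx fun hexit => hxb ?_
  obtain ⟨k, hk⟩ := mem_iUnion.mp (hab.exitSet_subset hexit)
  exact mem_iUnion.mpr ⟨k, hk.1.lt_of_ne' (hne k), hk.2⟩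

lemma vanishesOff_apply_neg [Countable A] (hab : HasEndpoints Ω ε a b)
    (hU : IsTranslationGroup Ω U) (k : K)
    (hf : VanishesOff (volume.restrict Ω) (Ioo (b k - ε) (b k)) f) :
    VanishesOff (volume.restrict Ω) (⋃ i, Ioo (a i) (a i + ε)) (U (-ε) f) := by
  have hf' : VanishesOff (volume.restrict Ω) (exitSet Ω (- -ε)) f := by
    rw [neg_neg]
    exact hf.mono (hab.Ioo_right_subset_exitSet k le_rfl)
  filter_upwards [hU.vanishesOff_exitSet hab.measurableSet hf',
    ae_all_iff.mpr fun i => Measure.ae_ne (volume.restrict Ω) (a i + ε)] with x hx hne hxa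
  refine hx fun hexit => hxa ?_
  obtain ⟨i, hi⟩ := mem_iUnion.mp (hab.exitSet_neg_subset hexit)
  exact mem_iUnion.mpr ⟨i, hi.1, hi.2.lt_of_ne (hne i)⟩

theorem hasSum_apply [Countable K] (hab : HasEndpoints Ω ε a b) (hU : IsTranslationGroup Ω U)
    (i : A) (hf : VanishesOff (volume.restrict Ω) (Icc (a i) (a i + ε)) f) :
    HasSum (fun k => transitionCoeff U (a i) (b k) •
      truncTranslate hab.measurableSet (a i + ε - b k) f) (U ε f) :=
  hasSum_smul_truncTranslate hab.measurableSet (fun _ => measurableSet_Ioo)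
    hab.pairwise_disjoint_right
    (fun _ _ hx => ⟨by linarith [hx.1], by linarith [hx.2]⟩) hf.Ioo_of_Icc
    (hab.vanishesOff_apply hU i hf.Ioo_of_Icc) fun k => hab.apply_ae_eq hU i k hf.Ioo_of_Icc

theorem hasSum_apply_neg [Countable A] (hab : HasEndpoints Ω ε a b) (hU : IsTranslationGroup Ω U)
    (k : K) (hf : VanishesOff (volume.restrict Ω) (Icc (b k - ε) (b k)) f) :
    HasSum (fun i => conj (transitionCoeff U (a i) (b k)) •
      truncTranslate hab.measurableSet (b k - a i - ε) f) (U (-ε) f) :=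
  hasSum_smul_truncTranslate hab.measurableSet (fun _ => measurableSet_Ioo)
    hab.pairwise_disjoint_left
    (fun _ _ hx => ⟨by linarith [hx.1], by linarith [hx.2]⟩) hf.Ioo_of_Icc
    (hab.vanishesOff_apply_neg hU k hf.Ioo_of_Icc)
    fun i => hab.apply_neg_ae_eq hU i k hf.Ioo_of_Icc

lemma hasSum_apply_intervalIndicator [Countable K] (hab : HasEndpoints Ω ε a b)
    (hU : IsTranslationGroup Ω U) (i : A) :
    HasSum (fun k => transitionCoeff U (a i) (b k) • intervalIndicator Ω (b k - ε) (b k))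
      (U ε (intervalIndicator Ω (a i) (a i + ε))) := by
  convert hab.hasSum_apply hU i
    ((vanishesOff_intervalIndicator _ _ _).mono Ioo_subset_Icc_self) using 3 with k
  have hleft : b k - ε + (a i + ε - b k) = a i := by ring
  have hright : b k + (a i + ε - b k) = a i + ε := by ring
  have htrans := truncTranslate_intervalIndicator hab.measurableSet (c := a i + ε - b k)
    (p := b k - ε) (q := b k) (by rw [hleft, hright]; exact hab.Ioo_left_subset i)
  rwa [hleft, hright, eq_comm] at htrans

lemma hasSum_apply_neg_intervalIndicator [Countable A] (hab : HasEndpoints Ω ε a b)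
    (hU : IsTranslationGroup Ω U) (k : K) :
    HasSum (fun i => conj (transitionCoeff U (a i) (b k)) • intervalIndicator Ω (a i) (a i + ε))
      (U (-ε) (intervalIndicator Ω (b k - ε) (b k))) := by
  convert hab.hasSum_apply_neg hU k
    ((vanishesOff_intervalIndicator _ _ _).mono Ioo_subset_Icc_self) using 3 with i
  have hleft : a i + (b k - a i - ε) = b k - ε := by ring
  have hright : a i + ε + (b k - a i - ε) = b k := by ring
  have htrans := truncTranslate_intervalIndicator hab.measurableSet (c := b k - a i - ε)
    (p := a i) (q := a i + ε) (by rw [hleft, hright]; exact hab.Ioo_right_subset k)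
  rwa [hleft, hright, eq_comm] at htrans

theorem exists_unitary [Countable A] [Countable K] (hab : HasEndpoints Ω ε a b)
    (hU : IsTranslationGroup Ω U) :
    ∃ W : lp (fun _ : A => ℂ) 2 ≃ₗᵢ[ℂ] lp (fun _ : K => ℂ) 2,
      ∀ x k, W x k = ∑' i, x i * transitionCoeff U (a i) (b k) := by
  set s : ℂ := (((√ε)⁻¹ : ℝ) : ℂ)
  have hleft : Orthonormal ℂ fun i => U ε (s • intervalIndicator Ω (a i) (a i + ε)) :=
    (orthonormal_smul_intervalIndicator hab.pos (fun i => add_sub_cancel_left (a i) ε)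
      hab.Ioo_left_subset hab.pairwise_disjoint_left).comp_linearIsometryEquiv (U ε)
  have hright : Orthonormal ℂ fun k => s • intervalIndicator Ω (b k - ε) (b k) :=
    orthonormal_smul_intervalIndicator hab.pos (fun k => sub_sub_cancel (b k) ε)
      hab.Ioo_right_subset hab.pairwise_disjoint_right
  refine exists_unitary_of_hasSum_smul hleft hright
    (C := fun k i => conj (transitionCoeff U (a i) (b k))) (fun i => ?_) fun k => ?_
  · simpa only [map_smul, smul_comm s] using
      (hab.hasSum_apply_intervalIndicator hU i).const_smul s
  · have hsum := ((hab.hasSum_apply_neg_intervalIndicator hU k).mapL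
      (U ε).toContinuousLinearEquiv.toContinuousLinearMap).const_smul s
    simpa [smul_comm s, hU.apply_apply_neg] using hsum

end Expansion

end HasEndpoints

section Intervals

lemma exitSet_iUnion_subset {ι : Type*} (J : ι → Set ℝ) (t : ℝ) :
    exitSet (⋃ i, J i) t ⊆ ⋃ i, exitSet (J i) t := by
  rintro x ⟨hx, hexit⟩
  obtain ⟨i, hi⟩ := mem_iUnion.mp hx
  exact mem_iUnion.mpr ⟨i, hi, fun h => hexit (h.trans (subset_iUnion J i))⟩

lemma notMem_iUnion_of_mem_closure {X ι : Type*} [TopologicalSpace X] {J : ι → Set X}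
    (hJ : ∀ i, IsOpen (J i)) (hdisj : Pairwise (Function.onFun Disjoint J)) {x : X} {i : ι}
    (hx : x ∈ closure (J i)) (hxi : x ∉ J i) : x ∉ ⋃ j, J j := by
  refine fun hmem => ?_
  obtain ⟨j, hj⟩ := mem_iUnion.mp hmem
  have hij : i ≠ j := fun hij => hxi (hij ▸ hj)
  exact disjoint_left.mp ((hdisj hij).closure_left (hJ j)) hx hj

lemma injective_of_pairwise_disjoint {X ι : Type*} {J : ι → Set X}
    (hdisj : Pairwise (Function.onFun Disjoint J)) {g : ι → X} (hg : ∀ i, g i ∈ J i) :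
    Function.Injective g := by
  intro i j hij
  by_contra hne
  exact disjoint_left.mp (hdisj hne) (hg i) (hij ▸ hg j)

/-- The real points of the open interval with extended endpoints `α` and `β`. -/
def realIoo (α β : EReal) : Set ℝ := {x : ℝ | α < (x : EReal) ∧ (x : EReal) < β}

variable {α β : EReal} {ε : ℝ}

lemma isOpen_realIoo (α β : EReal) : IsOpen (realIoo α β) :=
  (isOpen_Ioo (a := α) (b := β)).preimage continuous_coe_real_ereal

lemma ordConnected_realIoo (α β : EReal) : (realIoo α β).OrdConnected :=
  ⟨fun _ hx _ hy _ hz => ⟨hx.1.trans_le (EReal.coe_le_coe_iff.mpr hz.1),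
    (EReal.coe_le_coe_iff.mpr hz.2).trans_lt hy.2⟩⟩

lemma toReal_left_notMem_realIoo (hα : α ≠ ⊥) : α.toReal ∉ realIoo α β :=
  fun h => (EReal.coe_toReal_le hα).not_gt h.1

lemma toReal_right_notMem_realIoo (hβ : β ≠ ⊤) : β.toReal ∉ realIoo α β :=
  fun h => (EReal.le_coe_toReal hβ).not_gt h.2

lemma Ioc_toReal_subset_realIoo (hα : α ≠ ⊥) (h : ε + α < β) :
    Ioc α.toReal (α.toReal + ε) ⊆ realIoo α β := by
  have hα' : α ≠ ⊤ := by
    rintro rfl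
    simp at h
  lift α to ℝ using ⟨hα', hα⟩
  refine fun x hx => ⟨EReal.coe_lt_coe_iff.mpr hx.1, lt_of_le_of_lt ?_ h⟩
  rw [← EReal.coe_add, EReal.coe_le_coe_iff, add_comm]
  exact hx.2

lemma Ico_toReal_subset_realIoo (hβ : β ≠ ⊤) (h : ε + α < β) :
    Ico (β.toReal - ε) β.toReal ⊆ realIoo α β := by
  lift β to ℝ using ⟨hβ, h.ne_bot⟩
  refine fun x hx => ⟨?_, EReal.coe_lt_coe_iff.mpr hx.2⟩
  refine lt_of_lt_of_le ?_ (EReal.coe_le_coe_iff.mpr hx.1)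
  rw [EReal.coe_sub, EReal.lt_sub_iff_add_lt (by simp) (by simp), add_comm]
  exact h

lemma toReal_left_mem_closure_realIoo (hα : α ≠ ⊥) (hε : 0 < ε) (h : ε + α < β) :
    α.toReal ∈ closure (realIoo α β) := by
  refine closure_mono (Ioc_toReal_subset_realIoo hα h) ?_
  rw [closure_Ioc (lt_add_of_pos_right _ hε).ne]
  exact left_mem_Icc.mpr (lt_add_of_pos_right _ hε).le

lemma toReal_right_mem_closure_realIoo (hβ : β ≠ ⊤) (hε : 0 < ε) (h : ε + α < β) :
    β.toReal ∈ closure (realIoo α β) := by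
  refine closure_mono (Ico_toReal_subset_realIoo hβ h) ?_
  rw [closure_Ico (sub_lt_self _ hε).ne]
  exact right_mem_Icc.mpr (sub_lt_self _ hε).le

lemma mem_Ioc_toReal_of_mem_exitSet (hε : 0 ≤ ε) {x : ℝ} (hx : x ∈ exitSet (realIoo α β) (-ε)) :
    α ≠ ⊥ ∧ x ∈ Ioc α.toReal (α.toReal + ε) := by
  have hlt : ((x + -ε : ℝ) : EReal) < β :=
    (EReal.coe_le_coe_iff.mpr (by linarith)).trans_lt hx.1.2
  have hle : ((x + -ε : ℝ) : EReal) ≤ α :=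
    not_lt.mp fun h => hx.2 ((ordConnected_realIoo α β).uIcc_subset hx.1 ⟨h, hlt⟩)
  have hα : α ≠ ⊥ := by
    rintro rfl
    exact EReal.coe_ne_bot _ (le_bot_iff.mp hle)
  lift α to ℝ using ⟨hx.1.1.ne_top, hα⟩
  have hle' := EReal.coe_le_coe_iff.mp hle
  exact ⟨hα, EReal.coe_lt_coe_iff.mp hx.1.1, by rw [EReal.toReal_coe]; linarith⟩

lemma mem_Ico_toReal_of_mem_exitSet (hε : 0 ≤ ε) {x : ℝ} (hx : x ∈ exitSet (realIoo α β) ε) :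
    β ≠ ⊤ ∧ x ∈ Ico (β.toReal - ε) β.toReal := by
  have hlt : α < ((x + ε : ℝ) : EReal) :=
    hx.1.1.trans_le (EReal.coe_le_coe_iff.mpr (by linarith))
  have hle : β ≤ ((x + ε : ℝ) : EReal) :=
    not_lt.mp fun h => hx.2 ((ordConnected_realIoo α β).uIcc_subset hx.1 ⟨hlt, h⟩)
  have hβ : β ≠ ⊤ := by
    rintro rfl
    exact EReal.coe_ne_top _ (top_le_iff.mp hle)
  lift β to ℝ using ⟨hβ, hx.1.2.ne_bot⟩
  have hle' := EReal.coe_le_coe_iff.mp hle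
  exact ⟨hβ, by rw [EReal.toReal_coe]; linarith, EReal.coe_lt_coe_iff.mp hx.1.2⟩

end Intervals

section Components

variable {I : Type*} {α β : I → EReal} {ε : ℝ}

theorem hasEndpoints_iUnion
    (hdisj : Pairwise (Function.onFun Disjoint fun i => realIoo (α i) (β i))) (hε : 0 < ε)
    (hl : ∀ i, ε < β i - α i) :
    HasEndpoints (⋃ i, realIoo (α i) (β i)) ε (fun i : {i // α i ≠ ⊥} => (α i).toReal)
      (fun k : {k // β k ≠ ⊤} => (β k).toReal) := by
  have hlen (i : I) : ε + α i < β i := EReal.add_lt_of_lt_sub (hl i)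
  have hleft (i : {i // α i ≠ ⊥}) := Ioc_toReal_subset_realIoo i.2 (hlen i)
  have hright (k : {k // β k ≠ ⊤}) := Ico_toReal_subset_realIoo k.2 (hlen k)
  have hopen (i : I) := isOpen_realIoo (α i) (β i)
  refine
    { isOpen := isOpen_iUnion hopen
      pos := hε
      left_injective := .of_comp (f := (· + ε)) <| injective_of_pairwise_disjoint
        (hdisj.comp_of_injective Subtype.val_injective)
        fun i => hleft i (right_mem_Ioc.mpr (lt_add_of_pos_right _ hε))
      right_injective := .of_comp (f := (· - ε)) <| injective_of_pairwise_disjoint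
        (hdisj.comp_of_injective Subtype.val_injective)
        fun k => hright k (left_mem_Ico.mpr (sub_lt_self _ hε))
      left_notMem := fun i => notMem_iUnion_of_mem_closure hopen hdisj
        (toReal_left_mem_closure_realIoo i.2 hε (hlen i)) (toReal_left_notMem_realIoo i.2)
      right_notMem := fun k => notMem_iUnion_of_mem_closure hopen hdisj
        (toReal_right_mem_closure_realIoo k.2 hε (hlen k)) (toReal_right_notMem_realIoo k.2)
      left_subset := fun i => (hleft i).trans (subset_iUnion_of_subset i.1 subset_rfl)
      right_subset := fun k => (hright k).trans (subset_iUnion_of_subset k.1 subset_rfl)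
      exitSet_neg_subset := (exitSet_iUnion_subset _ _).trans (iUnion_subset fun i x hx => ?_)
      exitSet_subset := (exitSet_iUnion_subset _ _).trans (iUnion_subset fun k x hx => ?_) }
  · obtain ⟨hα, hmem⟩ := mem_Ioc_toReal_of_mem_exitSet hε.le hx
    exact mem_iUnion.mpr ⟨⟨i, hα⟩, hmem⟩
  · obtain ⟨hβ, hmem⟩ := mem_Ico_toReal_of_mem_exitSet hε.le hx
    exact mem_iUnion.mpr ⟨⟨k, hβ⟩, hmem⟩

end Components

end

/-- Any strongly continuous unitary group with the integrability property on a
countable union of disjoint intervals whose lengths are bounded below by `l > 0` is governed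
at the endpoints by a unitary boundary matrix `B`: for `0 < ε < l`, a function supported on
`[α_i, α_i + ε]` is mapped by `U(ε)` to `Σ_k b_{i,k} T(α_i + ε - β_k) f`, and a function
supported on `[β_k - ε, β_k]` is mapped by `U(-ε)` to `Σ_j conj(b_{j,k}) T(β_k - α_j - ε) f`. -/
theorem statement5 (I : Type) [Countable I] (α β : I → EReal)
    (hαtop : ∀ i, α i ≠ ⊤) (hβbot : ∀ i, β i ≠ ⊥)
    (hdisj : Pairwise fun i j => Disjoint
      {x : ℝ | α i < (x : EReal) ∧ (x : EReal) < β i}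
      {x : ℝ | α j < (x : EReal) ∧ (x : EReal) < β j})
    (Ω : Set ℝ) (hΩ : Ω = ⋃ i, {x : ℝ | α i < (x : EReal) ∧ (x : EReal) < β i})
    (hl : 0 < ⨅ i, (β i - α i))
    (U : ℝ → (Lp ℂ 2 (volume.restrict Ω) ≃ₗᵢ[ℂ] Lp ℂ 2 (volume.restrict Ω)))
    (hU0 : U 0 = LinearIsometryEquiv.refl ℂ (Lp ℂ 2 (volume.restrict Ω)))
    (hUadd : ∀ s t f, U (s + t) f = U s (U t f))
    (hUcont : ∀ f, Continuous fun t => U t f)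
    (hInt : ∀ V : Set ℝ, IsOpen V → V ⊆ Ω → ∀ δ : ℝ, 0 < δ →
      (∀ s : ℝ, |s| < δ → (fun x => x + s) '' V ⊆ Ω) →
      ∀ s : ℝ, |s| < δ → ∀ f, ∀ᵐ x ∂(volume.restrict V),
        (U s f : ℝ → ℂ) x = (f : ℝ → ℂ) (x + s)) :
    ∃ B : {i : I // α i ≠ ⊥} → {k : I // β k ≠ ⊤} → ℂ,
      -- `B` is the matrix of a unitary operator from `ℓ²({i : α_i > -∞})`
      -- onto `ℓ²({k : β_k < ∞})`
      (∃ W : lp (fun _ : {i : I // α i ≠ ⊥} => ℂ) 2 ≃ₗᵢ[ℂ]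
          lp (fun _ : {k : I // β k ≠ ⊤} => ℂ) 2,
        ∀ x k, W x k = ∑' i : {i : I // α i ≠ ⊥}, x i * B i k) ∧
      ∀ ε : ℝ, 0 < ε → (ε : EReal) < ⨅ i, (β i - α i) →
        -- (1) transition at a finite left endpoint `α_i`
        (∀ (i : {i : I // α i ≠ ⊥}) (f : Lp ℂ 2 (volume.restrict Ω)),
          (∀ᵐ x ∂(volume.restrict Ω),
            x ∉ Set.Icc ((α i.1).toReal) ((α i.1).toReal + ε) → (f : ℝ → ℂ) x = 0) →
          ∃ g : {k : I // β k ≠ ⊤} → Lp ℂ 2 (volume.restrict Ω),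
            (∀ k, (g k : ℝ → ℂ) =ᵐ[volume.restrict Ω] {x : ℝ | x + ((α i.1).toReal + ε - (β k.1).toReal) ∈ Ω}.indicator
                (fun x => (f : ℝ → ℂ) (x + ((α i.1).toReal + ε - (β k.1).toReal)))) ∧
            HasSum (fun k => B i k • g k) (U ε f)) ∧
        -- (2) transition at a finite right endpoint `β_k`
        (∀ (k : {k : I // β k ≠ ⊤}) (f : Lp ℂ 2 (volume.restrict Ω)),
          (∀ᵐ x ∂(volume.restrict Ω),
            x ∉ Set.Icc ((β k.1).toReal - ε) ((β k.1).toReal) → (f : ℝ → ℂ) x = 0) →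
          ∃ g : {i : I // α i ≠ ⊥} → Lp ℂ 2 (volume.restrict Ω),
            (∀ j, (g j : ℝ → ℂ) =ᵐ[volume.restrict Ω] {x : ℝ | x + ((β k.1).toReal - (α j.1).toReal - ε) ∈ Ω}.indicator
                (fun x => (f : ℝ → ℂ) (x + ((β k.1).toReal - (α j.1).toReal - ε)))) ∧
            HasSum (fun j => (starRingEnd ℂ) (B j k) • g j) (U (-ε) f)) := by
  have hends (ε : ℝ) (hε : 0 < ε) (hεl : (ε : EReal) < ⨅ i, (β i - α i)) :
      HasEndpoints Ω ε (fun i : {i // α i ≠ ⊥} => (α i).toReal)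
        (fun k : {k // β k ≠ ⊤} => (β k).toReal) :=
    hΩ ▸ hasEndpoints_iUnion hdisj hε fun i => hεl.trans_le (iInf_le _ i)
  obtain ⟨ε₀, hε₀, hε₀l⟩ := EReal.lt_iff_exists_real_btwn.mp hl
  have hends₀ := hends ε₀ (EReal.coe_pos.mp hε₀) hε₀l
  have hU : IsTranslationGroup Ω U :=
    isTranslationGroup_of_integrability hends₀.isOpen (fun f => by rw [hU0]; rfl) hUadd hInt
  refine ⟨fun i k => transitionCoeff U (α i.1).toReal (β k.1).toReal,
    hends₀.exists_unitary hU, fun ε hε hεl => ⟨fun i f hf => ?_, fun k f hf => ?_⟩⟩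
  · exact ⟨_, fun k => truncTranslate_ae_eq (hends ε hε hεl).measurableSet _ f,
      (hends ε hε hεl).hasSum_apply hU i hf⟩
  · exact ⟨_, fun j => truncTranslate_ae_eq (hends ε hε hεl).measurableSet _ f,
      (hends ε hε hεl).hasSum_apply_neg hU k hf⟩
end

section
/- Let Ω = ∪_{i=1}^{N}(α_i, β_i) ⊆ ℝ be a finite union of pairwise disjoint open intervals, exactly one of which is unbounded (exactly one endpoint among α_1, β_1, …, α_N, β_N is infinite). Then there exists no strongly continuous unitary group (U(t))_{t∈ℝ} on L²(Ω) with the integrability property. -/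
open MeasureTheory

/-!
A unitary group that translates locally must translate functions on the half-line of `Ω` as long as
their support does not meet its endpoint, and once a function has been pushed through the endpoint
it has to live on the bounded intervals. Take the indicator `f` of an interval of length `d` in the
half-line. Then `⟪f, U t f⟫ = max (d - |t|) 0`, so `‖U s f - f‖² ≤ 2|s|`, and the translates
`h n = U (t n) f` along a suitable sequence are pairwise orthogonal, vanish on the half-line, and
satisfy the same modulus of continuity. On a bounded interval `I ⊆ Ω` of length `ℓ` this modulus
controls the oscillation: averaging `|h (x + s) - h x|²` over `x, x + s ∈ I` shows that
`∫_I |h n|²` exceeds `|∫_I h n|² / ℓ` by at most `2ℓ`, while `∫_I h n → 0` by Bessel's inequality.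
Summing over the bounded intervals, `d = ‖h n‖²` is at most twice their total length, which is
absurd for large `d`: a long wave packet cannot be stored in a short cavity.
-/

open Set Filter
open scoped Topology ENNReal

section SquareIntegrable

variable {X E : Type*} [MeasurableSpace X] {μ : Measure X} [NormedAddCommGroup E]

lemma enorm_sq_eq_lintegral (f : Lp E 2 μ) : ‖f‖ₑ ^ 2 = ∫⁻ x, ‖f x‖ₑ ^ 2 ∂μ := by
  simpa [Lp.enorm_def] using eLpNorm_nnreal_pow_eq_lintegral (f := f) (μ := μ) (p := 2) two_ne_zero

lemma lintegral_enorm_sq_eq_ofReal {f : X → E} (hf : MemLp f 2 μ) :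
    ∫⁻ x, ‖f x‖ₑ ^ 2 ∂μ = ENNReal.ofReal (∫ x, ‖f x‖ ^ 2 ∂μ) := by
  rw [ofReal_integral_eq_lintegral_ofReal (hf.integrable_norm_pow two_ne_zero)
    (.of_forall fun x => by positivity)]
  simp_rw [ENNReal.ofReal_pow (norm_nonneg _), ofReal_norm]

variable [InnerProductSpace ℝ E] [CompleteSpace E] [IsFiniteMeasure μ]

lemma integral_norm_sub_sq {f : X → E} (hf : MemLp f 2 μ) (c : E) :
    ∫ x, ‖f x - c‖ ^ 2 ∂μ =
      ∫ x, ‖f x‖ ^ 2 ∂μ - 2 * inner ℝ c (∫ x, f x ∂μ) + μ.real univ * ‖c‖ ^ 2 := by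
  have hf₁ : Integrable f μ := hf.integrable one_le_two
  have hf₂ : Integrable (fun x => ‖f x‖ ^ 2) μ := hf.integrable_norm_pow two_ne_zero
  have hin : Integrable (fun x => 2 * inner ℝ c (f x)) μ := (hf₁.const_inner c).const_mul 2
  have hexpand (x : X) : ‖f x - c‖ ^ 2 = ‖f x‖ ^ 2 - 2 * inner ℝ c (f x) + ‖c‖ ^ 2 := by
    rw [norm_sub_sq_real, real_inner_comm]
  simp_rw [hexpand]
  rw [integral_add (f := fun x => ‖f x‖ ^ 2 - 2 * inner ℝ c (f x)) (hf₂.sub hin)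
    (integrable_const _), integral_sub hf₂ hin, integral_const_mul, integral_inner hf₁,
    integral_const, smul_eq_mul]

lemma lintegral_lintegral_enorm_sub_sq {f : X → E} (hf : MemLp f 2 μ) :
    ∫⁻ x, ∫⁻ y, ‖f y - f x‖ₑ ^ 2 ∂μ ∂μ =
      ENNReal.ofReal (2 * (μ.real univ * ∫ x, ‖f x‖ ^ 2 ∂μ - ‖∫ x, f x ∂μ‖ ^ 2)) := by
  have hf₁ : Integrable f μ := hf.integrable one_le_two
  have hf₂ : Integrable (fun x => ‖f x‖ ^ 2) μ := hf.integrable_norm_pow two_ne_zero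
  have hin : Integrable (fun x => 2 * inner ℝ (f x) (∫ y, f y ∂μ)) μ :=
    (hf₁.inner_const _).const_mul 2
  have hsub : Integrable
      (fun x => (∫ y, ‖f y‖ ^ 2 ∂μ) - 2 * inner ℝ (f x) (∫ y, f y ∂μ)) μ :=
    (integrable_const _).sub hin
  have hint : Integrable (fun x => ∫ y, ‖f y - f x‖ ^ 2 ∂μ) μ := by
    simp_rw [integral_norm_sub_sq hf]
    exact hsub.add (hf₂.const_mul _)
  have hinner : ∫ x, inner ℝ (f x) (∫ y, f y ∂μ) ∂μ = ‖∫ y, f y ∂μ‖ ^ 2 := by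
    simp_rw [real_inner_comm (∫ y, f y ∂μ)]
    rw [integral_inner hf₁, real_inner_self_eq_norm_sq]
  have hslice (x : X) : ∫⁻ y, ‖f y - f x‖ₑ ^ 2 ∂μ = ENNReal.ofReal (∫ y, ‖f y - f x‖ ^ 2 ∂μ) :=
    lintegral_enorm_sq_eq_ofReal (hf.sub (memLp_const (f x)))
  simp_rw [hslice]
  rw [← ofReal_integral_eq_lintegral_ofReal hint
    (.of_forall fun x => integral_nonneg fun y => by positivity)]
  congr 1
  simp_rw [integral_norm_sub_sq hf]
  rw [integral_add hsub (hf₂.const_mul _), integral_sub (integrable_const _) hin,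
    integral_const_mul, integral_const_mul, hinner, integral_const, smul_eq_mul]
  ring

end SquareIntegrable

lemma setLIntegral_setLIntegral_eq_lintegral_shear {G : Type*} [AddGroup G] [MeasurableSpace G]
    [MeasurableAdd₂ G] {μ : Measure G} [SFinite μ] [μ.IsAddLeftInvariant] {A B : Set G}
    (hB : MeasurableSet B) {g : G → G → ℝ≥0∞} (hg : Measurable (Function.uncurry g)) :
    ∫⁻ x in A, ∫⁻ y in B, g x y ∂μ ∂μ =
      ∫⁻ s, ∫⁻ x in (· + s) ⁻¹' B ∩ A, g x (x + s) ∂μ ∂μ := by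
  have hmeas : Measurable (Function.uncurry fun x s => B.indicator (g x) (x + s)) := by
    have hprod : Measurable ((Prod.snd ⁻¹' B).indicator (Function.uncurry g)) :=
      hg.indicator (measurable_snd hB)
    exact hprod.comp (measurable_fst.prodMk measurable_add)
  calc ∫⁻ x in A, ∫⁻ y in B, g x y ∂μ ∂μ
    _ = ∫⁻ x in A, ∫⁻ s, B.indicator (g x) (x + s) ∂μ ∂μ :=
      lintegral_congr fun x => by
        rw [lintegral_add_left_eq_self (B.indicator (g x)) x, lintegral_indicator hB]
    _ = ∫⁻ s, ∫⁻ x in A, B.indicator (g x) (x + s) ∂μ ∂μ :=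
      lintegral_lintegral_swap hmeas.aemeasurable
    _ = ∫⁻ s, ∫⁻ x in (· + s) ⁻¹' B ∩ A, g x (x + s) ∂μ ∂μ :=
      lintegral_congr fun s =>
        setLIntegral_indicator (measurable_add_const s hB) fun x => g x (x + s)

lemma tendsto_inner_cofinite_zero_of_pairwise_orthogonal {𝕜 E ι : Type*} [RCLike 𝕜]
    [NormedAddCommGroup E] [InnerProductSpace 𝕜 E] {h : ι → E} {r : ℝ}
    (hnorm : ∀ i, ‖h i‖ = r) (horth : Pairwise fun i j => inner 𝕜 (h i) (h j) = 0) (x : E) :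
    Tendsto (fun i => inner 𝕜 x (h i)) cofinite (𝓝 0) := by
  rcases eq_or_ne r 0 with rfl | hr
  · simp [fun i => norm_eq_zero.1 (hnorm i), tendsto_const_nhds]
  have hne (i : ι) : h i ≠ 0 := norm_ne_zero_iff.1 ((hnorm i).trans_ne hr)
  have hon : Orthonormal 𝕜 fun i => ((r : 𝕜)⁻¹) • h i := by
    refine ⟨fun i => ?_, fun i j hij => ?_⟩
    · rw [← hnorm i]
      exact norm_smul_inv_norm (hne i)
    · simp only [inner_smul_left, inner_smul_right, horth hij, mul_zero]
  have hlim := ((hon.inner_products_summable x).tendsto_cofinite_zero.sqrt).const_mul |r|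
  rw [Real.sqrt_zero, mul_zero] at hlim
  refine tendsto_zero_iff_norm_tendsto_zero.2 (hlim.congr fun i => ?_)
  rw [Real.sqrt_sq (norm_nonneg _), norm_inner_symm, inner_smul_right, norm_mul, norm_inv,
    RCLike.norm_ofReal, mul_inv_cancel_left₀ (abs_ne_zero.2 hr)]

lemma abs_le_abs_succ_mul_sub_succ_mul {m n : ℕ} (hmn : m ≠ n) (T : ℝ) :
    |T| ≤ |(n + 1) * T - (m + 1) * T| := by
  have hone : (1 : ℝ) ≤ |(n : ℝ) - m| := by
    exact_mod_cast Int.one_le_abs (sub_ne_zero.2 (Int.ofNat_inj.not.2 hmn.symm))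
  rw [← sub_mul, add_sub_add_right_eq_sub, abs_mul]
  exact le_mul_of_one_le_left (abs_nonneg T) hone

/-- A half-line: an open ray in `ℝ`, pointing in either direction. -/
def IsHalfLine (H : Set ℝ) : Prop := ∃ c, H = Ioi c ∨ H = Iio c

namespace IsHalfLine

variable {H : Set ℝ}

lemma isOpen (hH : IsHalfLine H) : IsOpen H := by
  obtain ⟨c, rfl | rfl⟩ := hH
  exacts [isOpen_Ioi, isOpen_Iio]

lemma ordConnected (hH : IsHalfLine H) : H.OrdConnected := by
  obtain ⟨c, rfl | rfl⟩ := hH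
  exacts [ordConnected_Ioi, ordConnected_Iio]

lemma forall_add_mem_or_forall_add_neg_mem (hH : IsHalfLine H) (t : ℝ) :
    (∀ x ∈ H, x + t ∈ H) ∨ ∀ x ∈ H, x + -t ∈ H := by
  obtain ⟨c, rfl | rfl⟩ := hH <;> simp only [mem_Ioi, mem_Iio] <;>
    rcases le_total 0 t with ht | ht
  · exact .inl fun x hx => by linarith
  · exact .inr fun x hx => by linarith
  · exact .inr fun x hx => by linarith
  · exact .inl fun x hx => by linarith

lemma exists_Ioo_escaped_by_translates (hH : IsHalfLine H) {d : ℝ} (hd : 0 ≤ d) :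
    ∃ p T : ℝ, Ioo p (p + d) ⊆ H ∧ |T| = d ∧
      ∀ n : ℕ, ∀ x ∈ H, x + (n + 1) * T ∈ H \ Ioo p (p + d) := by
  have hmul (n : ℕ) : d ≤ (n + 1) * d := le_mul_of_one_le_left hd (by simp)
  obtain ⟨c, rfl | rfl⟩ := hH
  · refine ⟨c, d, fun x hx => hx.1, abs_of_nonneg hd, fun n x hx => ?_⟩
    rw [mem_Ioi] at hx
    exact ⟨by rw [mem_Ioi]; linarith [hmul n], fun h => by linarith [h.2, hmul n]⟩
  · refine ⟨c - d, -d, fun x hx => by simpa using hx.2, by rwa [abs_neg, abs_of_nonneg],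
      fun n x hx => ?_⟩
    rw [mem_Iio] at hx
    exact ⟨by rw [mem_Iio]; linarith [hmul n], fun h => by linarith [h.1, hmul n]⟩

end IsHalfLine

/-- A one-parameter unitary group on `L²(Ω)` with the integrability property: it acts by translation
wherever all small translates of an open set stay inside `Ω`. -/
structure IsLocalTranslationGroup (Ω : Set ℝ)
    (U : ℝ → (Lp ℂ 2 (volume.restrict Ω) ≃ₗᵢ[ℂ] Lp ℂ 2 (volume.restrict Ω))) : Prop where
  zero : U 0 = LinearIsometryEquiv.refl ℂ (Lp ℂ 2 (volume.restrict Ω))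
  add : ∀ s t f, U (s + t) f = U s (U t f)
  translate : ∀ V : Set ℝ, IsOpen V → V ⊆ Ω → ∀ δ : ℝ, 0 < δ →
    (∀ s : ℝ, |s| < δ → (fun x => x + s) '' V ⊆ Ω) →
    ∀ s : ℝ, |s| < δ → ∀ f, ∀ᵐ x ∂(volume.restrict V),
      (U s f : ℝ → ℂ) x = (f : ℝ → ℂ) (x + s)

namespace IsLocalTranslationGroup

variable {Ω : Set ℝ} {U : ℝ → (Lp ℂ 2 (volume.restrict Ω) ≃ₗᵢ[ℂ] Lp ℂ 2 (volume.restrict Ω))}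

lemma norm_apply_apply_sub (hU : IsLocalTranslationGroup Ω U) (s t : ℝ)
    (f : Lp ℂ 2 (volume.restrict Ω)) : ‖U s (U t f) - U t f‖ = ‖U s f - f‖ := by
  rw [← hU.add, add_comm, hU.add, ← map_sub, LinearIsometryEquiv.norm_map]

lemma inner_apply_apply (hU : IsLocalTranslationGroup Ω U) (s t : ℝ)
    (f g : Lp ℂ 2 (volume.restrict Ω)) : inner ℂ (U s f) (U t g) = inner ℂ f (U (t - s) g) := by
  rw [← LinearIsometryEquiv.inner_map_map (U s) f, ← hU.add, add_sub_cancel]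

lemma ae_eq_translate_nat_mul (hU : IsLocalTranslationGroup Ω U) {J : Set ℝ} (hJo : IsOpen J)
    (hJc : J.OrdConnected) {ρ : ℝ} (hJ : ∀ x ∈ J, ∀ r : ℝ, |r| < ρ → x + r ∈ Ω) {r : ℝ}
    (hr : |r| < ρ) (m : ℕ) (f : Lp ℂ 2 (volume.restrict Ω)) :
    ∀ᵐ x, x ∈ J → x + m * r ∈ J → (U (m * r) f : ℝ → ℂ) x = (f : ℝ → ℂ) (x + m * r) := by
  have hρ : 0 < ρ := (abs_nonneg r).trans_lt hr
  induction m with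
  | zero => simp [hU.zero]
  | succ m ih =>
    have hone_step : ∀ᵐ x, x ∈ J → (U r (U (m * r) f) : ℝ → ℂ) x = (U (m * r) f : ℝ → ℂ) (x + r) :=
      (ae_restrict_iff' hJo.measurableSet).1 <|
        hU.translate J hJo (fun x hx => by simpa using hJ x hx 0 (by simpa using hρ)) ρ hρ
          (by rintro s hs _ ⟨x, hx, rfl⟩; exact hJ x hx s hs) r hr (U (m * r) f)
    have ih_translate := (quasiMeasurePreserving_add_right (volume : Measure ℝ) r).ae ih
    filter_upwards [hone_step, ih_translate] with x hx_step hx_ih hxJ hxm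
    have hmul : ((m + 1 : ℕ) : ℝ) * r = r + m * r := by push_cast; ring
    rw [hmul, ← add_assoc] at hxm
    have hxr : x + r ∈ J := by
      have hm : (0 : ℝ) ≤ m := m.cast_nonneg
      rcases le_total 0 r with h | h
      · exact hJc.out hxJ hxm ⟨by linarith, by linarith [mul_nonneg hm h]⟩
      · exact hJc.out hxm hxJ ⟨by linarith [mul_nonpos_of_nonneg_of_nonpos hm h], by linarith⟩
    rw [hmul, ← add_assoc, hU.add, hx_step hxJ, hx_ih hxr hxm]

lemma ae_eq_translate_of_uniform (hU : IsLocalTranslationGroup Ω U) {J : Set ℝ} (hJo : IsOpen J)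
    (hJc : J.OrdConnected) {ρ : ℝ} (hρ : 0 < ρ) (hJ : ∀ x ∈ J, ∀ r : ℝ, |r| < ρ → x + r ∈ Ω)
    (t : ℝ) (f : Lp ℂ 2 (volume.restrict Ω)) :
    ∀ᵐ x, x ∈ J → x + t ∈ J → (U t f : ℝ → ℂ) x = (f : ℝ → ℂ) (x + t) := by
  obtain ⟨k, hk⟩ := exists_nat_gt (|t| / ρ)
  have hk₀ : (0 : ℝ) < k := (by positivity : 0 ≤ |t| / ρ).trans_lt hk
  have hsmall : |t / k| < ρ := by
    rwa [abs_div, abs_of_pos hk₀, div_lt_comm₀ hk₀ hρ]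
  simpa only [mul_div_cancel₀ t hk₀.ne'] using
    hU.ae_eq_translate_nat_mul hJo hJc hJ hsmall k f

lemma ae_eq_translate (hU : IsLocalTranslationGroup Ω U) {J : Set ℝ} (hJo : IsOpen J)
    (hJc : J.OrdConnected) (hJ : J ⊆ Ω) (t : ℝ) (f : Lp ℂ 2 (volume.restrict Ω)) :
    ∀ᵐ x, x ∈ J → x + t ∈ J → (U t f : ℝ → ℂ) x = (f : ℝ → ℂ) (x + t) := by
  let K (ρ : ℝ) : Set ℝ := {x | x - ρ ∈ J ∧ x + ρ ∈ J}
  have hKo (ρ : ℝ) : IsOpen (K ρ) :=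
    (hJo.preimage (continuous_sub_right ρ)).inter (hJo.preimage (continuous_add_const ρ))
  have hKc (ρ : ℝ) : (K ρ).OrdConnected :=
    ⟨fun x hx y hy z hz =>
      ⟨hJc.out hx.1 hy.1 ⟨by linarith [hz.1], by linarith [hz.2]⟩,
        hJc.out hx.2 hy.2 ⟨by linarith [hz.1], by linarith [hz.2]⟩⟩⟩
  have hKΩ (ρ : ℝ) : ∀ x ∈ K ρ, ∀ r : ℝ, |r| < ρ → x + r ∈ Ω := fun x hx r hr =>
    hJ (hJc.out hx.1 hx.2 ⟨by linarith [(abs_lt.1 hr).1], by linarith [(abs_lt.1 hr).2]⟩)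
  have hexhaust (x : ℝ) (hx : x ∈ J) : ∀ᶠ n : ℕ in atTop, x ∈ K (1 / (n + 1)) := by
    have hlim := tendsto_one_div_add_atTop_nhds_zero_nat (𝕜 := ℝ)
    have hsub := (tendsto_const_nhds (x := x)).sub hlim
    have hadd := (tendsto_const_nhds (x := x)).add hlim
    rw [sub_zero] at hsub
    rw [add_zero] at hadd
    exact (hsub.eventually (hJo.mem_nhds hx)).and (hadd.eventually (hJo.mem_nhds hx))
  filter_upwards [ae_all_iff.2 fun n : ℕ => hU.ae_eq_translate_of_uniform (hKo (1 / (n + 1)))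
    (hKc _) Nat.one_div_pos_of_nat (hKΩ _) t f] with x hx hxJ hxt
  obtain ⟨n, hn, hnt⟩ := ((hexhaust x hxJ).and (hexhaust _ hxt)).exists
  exact hx n hn hnt

section Oscillation

variable {a b : ℝ}

lemma setLIntegral_enorm_translate_sub_sq_le (hU : IsLocalTranslationGroup Ω U)
    (hI : Ioo a b ⊆ Ω) (s : ℝ) (h : Lp ℂ 2 (volume.restrict Ω)) :
    ∫⁻ x in (· + s) ⁻¹' Ioo a b ∩ Ioo a b, ‖(h : ℝ → ℂ) (x + s) - (h : ℝ → ℂ) x‖ₑ ^ 2 ≤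
      ‖U s h - h‖ₑ ^ 2 := by
  have hmeas : MeasurableSet ((· + s) ⁻¹' Ioo a b ∩ Ioo a b) :=
    (measurable_add_const s measurableSet_Ioo).inter measurableSet_Ioo
  have hsubset : (· + s) ⁻¹' Ioo a b ∩ Ioo a b ⊆ Ω := inter_subset_right.trans hI
  have hsub := (ae_restrict_iff' hmeas).1
    (ae_restrict_of_ae_restrict_of_subset hsubset (Lp.coeFn_sub (U s h) h))
  rw [enorm_sq_eq_lintegral]
  refine le_trans (le_of_eq (setLIntegral_congr_fun_ae hmeas ?_)) (lintegral_mono_set hsubset)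
  filter_upwards [hU.ae_eq_translate isOpen_Ioo ordConnected_Ioo hI s h, hsub] with x hx hx_sub hxI
  rw [hx_sub hxI, Pi.sub_apply, hx hxI.2 hxI.1]

lemma setLIntegral_setLIntegral_enorm_sub_sq_le (hU : IsLocalTranslationGroup Ω U) (hab : a ≤ b)
    (hI : Ioo a b ⊆ Ω) {h : Lp ℂ 2 (volume.restrict Ω)} {D : ℝ}
    (hD : ∀ s : ℝ, |s| ≤ b - a → ‖U s h - h‖ ^ 2 ≤ D) :
    ∫⁻ x in Ioo a b, ∫⁻ y in Ioo a b, ‖(h : ℝ → ℂ) y - (h : ℝ → ℂ) x‖ₑ ^ 2 ≤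
      ENNReal.ofReal (2 * ((b - a) * D)) := by
  have hh : Measurable (h : ℝ → ℂ) := (Lp.stronglyMeasurable h).measurable
  have hD₀ : 0 ≤ D := (sq_nonneg _).trans (hD 0 (by simpa using hab))
  have hslice (s : ℝ) : ∫⁻ x in (· + s) ⁻¹' Ioo a b ∩ Ioo a b,
      ‖(h : ℝ → ℂ) (x + s) - (h : ℝ → ℂ) x‖ₑ ^ 2 ≤
        (Icc (-(b - a)) (b - a)).indicator (fun _ => ENNReal.ofReal D) s := by
    by_cases hs : s ∈ Icc (-(b - a)) (b - a)
    · rw [indicator_of_mem hs]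
      refine (hU.setLIntegral_enorm_translate_sub_sq_le hI s h).trans ?_
      rw [← ofReal_norm, ← ENNReal.ofReal_pow (norm_nonneg _)]
      exact ENNReal.ofReal_le_ofReal (hD s (abs_le.2 hs))
    · have hempty : (· + s) ⁻¹' Ioo a b ∩ Ioo a b = ∅ :=
        eq_empty_of_forall_notMem fun x ⟨hxs, hx⟩ =>
          hs ⟨by linarith [hxs.1, hx.2], by linarith [hxs.2, hx.1]⟩
      rw [hempty, setLIntegral_empty]
      exact zero_le
  calc ∫⁻ x in Ioo a b, ∫⁻ y in Ioo a b, ‖(h : ℝ → ℂ) y - (h : ℝ → ℂ) x‖ₑ ^ 2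
    _ = ∫⁻ s, ∫⁻ x in (· + s) ⁻¹' Ioo a b ∩ Ioo a b,
          ‖(h : ℝ → ℂ) (x + s) - (h : ℝ → ℂ) x‖ₑ ^ 2 :=
      setLIntegral_setLIntegral_eq_lintegral_shear measurableSet_Ioo <|
        ((hh.comp measurable_snd).sub (hh.comp measurable_fst)).enorm.pow_const 2
    _ ≤ ∫⁻ s, (Icc (-(b - a)) (b - a)).indicator (fun _ => ENNReal.ofReal D) s :=
      lintegral_mono hslice
    _ = ENNReal.ofReal (2 * ((b - a) * D)) := by
      rw [lintegral_indicator_const measurableSet_Icc, Real.volume_Icc, ← ENNReal.ofReal_mul hD₀]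
      ring_nf

lemma setLIntegral_enorm_sq_le (hU : IsLocalTranslationGroup Ω U) (hab : a < b)
    (hI : Ioo a b ⊆ Ω) {h : Lp ℂ 2 (volume.restrict Ω)} {D : ℝ}
    (hD : ∀ s : ℝ, |s| ≤ b - a → ‖U s h - h‖ ^ 2 ≤ D) :
    ∫⁻ x in Ioo a b, ‖(h : ℝ → ℂ) x‖ₑ ^ 2 ≤
      ENNReal.ofReal (‖∫ x in Ioo a b, (h : ℝ → ℂ) x‖ ^ 2 / (b - a) + D) := by
  have hℓ : 0 < b - a := sub_pos.2 hab
  have hD₀ : 0 ≤ D := (sq_nonneg _).trans (hD 0 (by simpa using hℓ.le))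
  have hmem : MemLp (h : ℝ → ℂ) 2 (volume.restrict (Ioo a b)) :=
    (Lp.memLp h).mono_measure (Measure.restrict_mono hI le_rfl)
  have hosc := hU.setLIntegral_setLIntegral_enorm_sub_sq_le hab.le hI hD
  rw [lintegral_lintegral_enorm_sub_sq hmem, measureReal_restrict_apply_univ,
    Real.volume_real_Ioo_of_le hab.le, ENNReal.ofReal_le_ofReal_iff (by positivity)] at hosc
  rw [lintegral_enorm_sq_eq_ofReal hmem]
  refine ENNReal.ofReal_le_ofReal ?_
  rw [← sub_le_iff_le_add, le_div_iff₀ hℓ]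
  linarith

end Oscillation

/-- The indicator function of the interval `(p, q)` as an element of `L²(Ω)`. -/
noncomputable def bump (Ω : Set ℝ) (p q : ℝ) : Lp ℂ 2 (volume.restrict Ω) :=
  indicatorConstLp 2 (measurableSet_Ioo (a := p) (b := q))
    ((Measure.restrict_apply_le Ω _).trans_lt measure_Ioo_lt_top).ne 1

lemma inner_bump_left {p q : ℝ} (hJ : Ioo p q ⊆ Ω) (f : Lp ℂ 2 (volume.restrict Ω)) :
    inner ℂ (bump Ω p q) f = ∫ x in Ioo p q, (f : ℝ → ℂ) x := by
  rw [bump, L2.inner_indicatorConstLp_one, Measure.restrict_restrict measurableSet_Ioo,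
    inter_eq_left.2 hJ]

lemma norm_bump_sq {p q : ℝ} (hpq : p ≤ q) (hJ : Ioo p q ⊆ Ω) : ‖bump Ω p q‖ ^ 2 = q - p := by
  rw [bump, norm_indicatorConstLp two_ne_zero ENNReal.ofNat_ne_top,
    measureReal_restrict_apply measurableSet_Ioo, inter_eq_left.2 hJ,
    Real.volume_real_Ioo_of_le hpq, norm_one, one_mul, ENNReal.toReal_ofNat,
    ← Real.sqrt_eq_rpow, Real.sq_sqrt (sub_nonneg.2 hpq)]

theorem sq_le_sum_of_pairwise_orthogonal (hU : IsLocalTranslationGroup Ω U) {ι : Type*} [Fintype ι]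
    {a b D : ι → ℝ} (hab : ∀ i, a i < b i) (hI : ∀ i, Ioo (a i) (b i) ⊆ Ω)
    {h : ℕ → Lp ℂ 2 (volume.restrict Ω)} {r : ℝ} (hnorm : ∀ n, ‖h n‖ = r)
    (horth : Pairwise fun m n => inner ℂ (h m) (h n) = 0)
    (hsupp : ∀ n, ∀ᵐ x ∂volume.restrict Ω, x ∉ ⋃ i, Ioo (a i) (b i) → (h n : ℝ → ℂ) x = 0)
    (hD : ∀ n i s, |s| ≤ b i - a i → ‖U s (h n) - h n‖ ^ 2 ≤ D i) :
    r ^ 2 ≤ ∑ i, D i := by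
  let bound (n : ℕ) (i : ι) : ℝ := ‖∫ x in Ioo (a i) (b i), (h n : ℝ → ℂ) x‖ ^ 2 / (b i - a i) + D i
  have hbound₀ (n : ℕ) (i : ι) : 0 ≤ bound n i :=
    add_nonneg (div_nonneg (sq_nonneg _) (sub_pos.2 (hab i)).le)
      ((sq_nonneg _).trans (hD n i 0 (by simpa using (hab i).le)))
  have hcov : MeasurableSet (⋃ i, Ioo (a i) (b i)) := .iUnion fun i => measurableSet_Ioo
  have hindicator (n : ℕ) : (fun x => ‖(h n : ℝ → ℂ) x‖ₑ ^ 2) =ᵐ[volume.restrict Ω]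
      (⋃ i, Ioo (a i) (b i)).indicator fun x => ‖(h n : ℝ → ℂ) x‖ₑ ^ 2 := by
    filter_upwards [hsupp n] with x hx
    by_cases hmem : x ∈ ⋃ i, Ioo (a i) (b i)
    · rw [indicator_of_mem hmem]
    · rw [indicator_of_notMem hmem, hx hmem, enorm_zero, zero_pow two_ne_zero]
  have hle (n : ℕ) : r ^ 2 ≤ ∑ i, bound n i := by
    rw [← ENNReal.ofReal_le_ofReal_iff (Finset.sum_nonneg fun i _ => hbound₀ n i)]
    calc ENNReal.ofReal (r ^ 2)
      _ = ∫⁻ x in Ω, ‖(h n : ℝ → ℂ) x‖ₑ ^ 2 := by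
        rw [← enorm_sq_eq_lintegral, ← hnorm n, ENNReal.ofReal_pow (norm_nonneg _), ofReal_norm]
      _ ≤ ∫⁻ x in ⋃ i, Ioo (a i) (b i), ‖(h n : ℝ → ℂ) x‖ₑ ^ 2 := by
        rw [lintegral_congr_ae (hindicator n), setLIntegral_indicator hcov]
        exact lintegral_mono_set inter_subset_left
      _ ≤ ∑ i, ∫⁻ x in Ioo (a i) (b i), ‖(h n : ℝ → ℂ) x‖ₑ ^ 2 :=
        (lintegral_iUnion_le _ _).trans_eq (tsum_fintype _)
      _ ≤ ∑ i, ENNReal.ofReal (bound n i) :=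
        Finset.sum_le_sum fun i _ => hU.setLIntegral_enorm_sq_le (hab i) (hI i) (hD n i)
      _ = ENNReal.ofReal (∑ i, bound n i) :=
        (ENNReal.ofReal_sum_of_nonneg fun i _ => hbound₀ n i).symm
  have hlim (i : ι) : Tendsto (fun n => bound n i) cofinite (𝓝 (D i)) := by
    have hzero := tendsto_inner_cofinite_zero_of_pairwise_orthogonal (𝕜 := ℂ) hnorm horth
      (bump Ω (a i) (b i))
    simp only [inner_bump_left (hI i)] at hzero
    simpa using ((hzero.norm.pow 2).div_const (b i - a i)).add_const (D i)
  exact ge_of_tendsto' (tendsto_finsetSum _ fun i _ => hlim i) hle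

section HalfLine

variable {H : Set ℝ} {p q : ℝ}

lemma apply_bump_ae_eq (hU : IsLocalTranslationGroup Ω U) (hH : IsHalfLine H) (hHΩ : H ⊆ Ω)
    (p q t : ℝ) :
    ∀ᵐ x, x ∈ H → x + t ∈ H →
      (U t (bump Ω p q) : ℝ → ℂ) x = (Ioo (p - t) (q - t)).indicator 1 x := by
  have hbump : ∀ᵐ x, x ∈ H → (bump Ω p q : ℝ → ℂ) x = (Ioo p q).indicator (fun _ => 1) x :=
    (ae_restrict_iff' hH.isOpen.measurableSet).1 <|
      ae_restrict_of_ae_restrict_of_subset hHΩ indicatorConstLp_coeFn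
  filter_upwards [hU.ae_eq_translate hH.isOpen hH.ordConnected hHΩ t (bump Ω p q),
    (quasiMeasurePreserving_add_right (volume : Measure ℝ) t).ae hbump] with x hx hx_bump hxH hxt
  rw [hx hxH hxt, hx_bump hxt]
  simp only [indicator_apply, mem_Ioo, sub_lt_iff_lt_add, lt_sub_iff_add_lt, Pi.one_apply]

lemma apply_bump_ae_eq_zero (hU : IsLocalTranslationGroup Ω U) (hH : IsHalfLine H) (hHΩ : H ⊆ Ω)
    {t : ℝ} (ht : ∀ x ∈ H, x + t ∈ H \ Ioo p q) :
    ∀ᵐ x, x ∈ H → (U t (bump Ω p q) : ℝ → ℂ) x = 0 := by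
  filter_upwards [hU.apply_bump_ae_eq hH hHΩ p q t] with x hx hxH
  rw [hx hxH (ht x hxH).1, indicator_of_notMem]
  exact fun hmem => (ht x hxH).2 ⟨by linarith [hmem.1], by linarith [hmem.2]⟩

lemma volume_real_Ioo_inter_Ioo_sub (p q t : ℝ) :
    volume.real (Ioo p q ∩ Ioo (p - t) (q - t)) = max (q - p - |t|) 0 := by
  rw [Ioo_inter_Ioo, Real.volume_real_Ioo]
  rcases le_total 0 t with ht | ht
  · rw [abs_of_nonneg ht, max_eq_left (sub_le_self p ht), min_eq_right (sub_le_self q ht),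
      sub_right_comm]
  · rw [abs_of_nonpos ht, max_eq_right (le_sub_self_iff p |>.2 ht),
      min_eq_left (le_sub_self_iff q |>.2 ht)]
    ring_nf

lemma inner_bump_apply_bump_of_forall_add_mem (hU : IsLocalTranslationGroup Ω U)
    (hH : IsHalfLine H) (hHΩ : H ⊆ Ω) (hJ : Ioo p q ⊆ H) {t : ℝ} (ht : ∀ x ∈ H, x + t ∈ H) :
    inner ℂ (bump Ω p q) (U t (bump Ω p q)) = ((max (q - p - |t|) 0 : ℝ) : ℂ) := by
  have htranslate : ∀ᵐ x, x ∈ Ioo p q →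
      (U t (bump Ω p q) : ℝ → ℂ) x = (Ioo (p - t) (q - t)).indicator 1 x := by
    filter_upwards [hU.apply_bump_ae_eq hH hHΩ p q t] with x hx hxJ
    exact hx (hJ hxJ) (ht x (hJ hxJ))
  rw [inner_bump_left (hJ.trans hHΩ), setIntegral_congr_ae measurableSet_Ioo htranslate,
    setIntegral_indicator measurableSet_Ioo, ← volume_real_Ioo_inter_Ioo_sub]
  simp

lemma inner_bump_apply_bump (hU : IsLocalTranslationGroup Ω U) (hH : IsHalfLine H) (hHΩ : H ⊆ Ω)
    (hJ : Ioo p q ⊆ H) (t : ℝ) :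
    inner ℂ (bump Ω p q) (U t (bump Ω p q)) = ((max (q - p - |t|) 0 : ℝ) : ℂ) := by
  rcases hH.forall_add_mem_or_forall_add_neg_mem t with ht | ht
  · exact hU.inner_bump_apply_bump_of_forall_add_mem hH hHΩ hJ ht
  · have hreverse : inner ℂ (U t (bump Ω p q)) (bump Ω p q) =
        inner ℂ (bump Ω p q) (U (-t) (bump Ω p q)) := by
      simpa [hU.zero] using hU.inner_apply_apply t 0 (bump Ω p q) (bump Ω p q)
    rw [← inner_conj_symm, hreverse, hU.inner_bump_apply_bump_of_forall_add_mem hH hHΩ hJ ht,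
      abs_neg, Complex.conj_ofReal]

lemma norm_apply_bump_sub_sq_le (hU : IsLocalTranslationGroup Ω U) (hH : IsHalfLine H)
    (hHΩ : H ⊆ Ω) (hpq : p ≤ q) (hJ : Ioo p q ⊆ H) (t : ℝ) :
    ‖U t (bump Ω p q) - bump Ω p q‖ ^ 2 ≤ 2 * |t| := by
  rw [norm_sub_rev, norm_sub_sq (𝕜 := ℂ), hU.inner_bump_apply_bump hH hHΩ hJ,
    LinearIsometryEquiv.norm_map, norm_bump_sq hpq (hJ.trans hHΩ), RCLike.re_eq_complex_re,
    Complex.ofReal_re]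
  linarith [le_max_left (q - p - |t|) 0]

lemma inner_apply_bump_apply_bump_eq_zero (hU : IsLocalTranslationGroup Ω U) (hH : IsHalfLine H)
    (hHΩ : H ⊆ Ω) (hJ : Ioo p q ⊆ H) {s t : ℝ} (hst : q - p ≤ |t - s|) :
    inner ℂ (U s (bump Ω p q)) (U t (bump Ω p q)) = 0 := by
  rw [hU.inner_apply_apply, hU.inner_bump_apply_bump hH hHΩ hJ,
    max_eq_right (sub_nonpos.2 hst), Complex.ofReal_zero]

end HalfLine

theorem ne_halfLine_union_iUnion_Ioo (hU : IsLocalTranslationGroup Ω U) {H : Set ℝ}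
    (hH : IsHalfLine H) {ι : Type*} [Finite ι] {a b : ι → ℝ} (hab : ∀ i, a i < b i) :
    Ω ≠ H ∪ ⋃ i, Ioo (a i) (b i) := by
  intro hΩ
  have := Fintype.ofFinite ι
  have hHΩ : H ⊆ Ω := hΩ ▸ subset_union_left
  have hI (i : ι) : Ioo (a i) (b i) ⊆ Ω :=
    hΩ ▸ (subset_iUnion (fun i => Ioo (a i) (b i)) i).trans subset_union_right
  have hΩ_meas : MeasurableSet Ω :=
    hΩ ▸ hH.isOpen.measurableSet.union (.iUnion fun i => measurableSet_Ioo)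
  let L : ℝ := ∑ i, 2 * (b i - a i)
  have hL : 0 ≤ L := Finset.sum_nonneg fun i _ => by linarith [hab i]
  obtain ⟨p, T, hJ, hT, hescape⟩ := hH.exists_Ioo_escaped_by_translates (d := L + 1) (by linarith)
  have hp : p ≤ p + (L + 1) := by linarith
  have hnorm_le : ‖bump Ω p (p + (L + 1))‖ ^ 2 ≤ L := by
    refine hU.sq_le_sum_of_pairwise_orthogonal hab hI
      (h := fun n => U ((n + 1) * T) (bump Ω p (p + (L + 1))))
      (fun n => LinearIsometryEquiv.norm_map _ _) (fun m n hmn => ?_) (fun n => ?_)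
      (fun n i s hs => ?_)
    · refine hU.inner_apply_bump_apply_bump_eq_zero hH hHΩ hJ ?_
      rw [add_sub_cancel_left, ← hT]
      exact abs_le_abs_succ_mul_sub_succ_mul hmn T
    · refine (ae_restrict_iff' hΩ_meas).2 ?_
      filter_upwards [hU.apply_bump_ae_eq_zero hH hHΩ (hescape n)] with x hx hxΩ hxI
      exact hx ((hΩ ▸ hxΩ : x ∈ H ∪ _).resolve_right hxI)
    · rw [hU.norm_apply_apply_sub]
      exact (hU.norm_apply_bump_sub_sq_le hH hHΩ hp hJ s).trans (by linarith)
  rw [norm_bump_sq hp (hJ.trans hHΩ)] at hnorm_le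
  linarith

end IsLocalTranslationGroup

lemma exists_lt_and_preimage_coe_Ioo_eq_Ioo {u v : EReal} (huv : u < v) (hu : u ≠ ⊥)
    (hv : v ≠ ⊤) : ∃ a b : ℝ, a < b ∧ Real.toEReal ⁻¹' Ioo u v = Ioo a b := by
  lift u to ℝ using ⟨huv.ne_top, hu⟩
  lift v to ℝ using ⟨hv, huv.ne_bot⟩
  exact ⟨u, v, EReal.coe_lt_coe_iff.1 huv, EReal.preimage_coe_Ioo u v⟩

lemma isHalfLine_preimage_coe_Ioo {u v : EReal} (huv : u < v)
    (h : u = ⊥ ∧ v ≠ ⊤ ∨ u ≠ ⊥ ∧ v = ⊤) : IsHalfLine (Real.toEReal ⁻¹' Ioo u v) := by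
  rcases h with ⟨rfl, hv⟩ | ⟨hu, rfl⟩
  · lift v to ℝ using ⟨hv, huv.ne_bot⟩
    exact ⟨v, .inr (EReal.preimage_coe_Ioo_bot v)⟩
  · lift u to ℝ using ⟨huv.ne_top, hu⟩
    exact ⟨u, .inl (EReal.preimage_coe_Ioo_top u)⟩

lemma exists_infinite_endpoint_forall_ne_finite {ι : Type*} [Finite ι] {α β : ι → EReal}
    (hone : Nat.card {i // α i = ⊥} + Nat.card {i // β i = ⊤} = 1) :
    ∃ j, (α j = ⊥ ∧ β j ≠ ⊤ ∨ α j ≠ ⊥ ∧ β j = ⊤) ∧ ∀ i ≠ j, α i ≠ ⊥ ∧ β i ≠ ⊤ := by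
  rw [← Nat.card_sum, Nat.card_eq_one_iff_exists] at hone
  obtain ⟨⟨j, hj⟩ | ⟨j, hj⟩, hunique⟩ := hone
  · have hα (i) (hi : α i = ⊥) : i = j := by simpa using hunique (.inl ⟨i, hi⟩)
    have hβ (i) : β i ≠ ⊤ := fun hi => by simpa using hunique (.inr ⟨i, hi⟩)
    exact ⟨j, .inl ⟨hj, hβ j⟩, fun i hij => ⟨mt (hα i) hij, hβ i⟩⟩
  · have hα (i) : α i ≠ ⊥ := fun hi => by simpa using hunique (.inl ⟨i, hi⟩)
    have hβ (i) (hi : β i = ⊤) : i = j := by simpa using hunique (.inr ⟨i, hi⟩)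
    exact ⟨j, .inr ⟨hα j, hj⟩, fun i hij => ⟨hα i, mt (hβ i) hij⟩⟩

/-- If `Ω ⊆ ℝ` is a finite union of pairwise disjoint open intervals, exactly
one of which is unbounded (exactly one infinite endpoint among all endpoints), then there is
no strongly continuous unitary group on `L²(Ω)` with the integrability property. -/
theorem statement8 (N : ℕ) (α β : Fin N → EReal)
    (hαtop : ∀ i, α i ≠ ⊤) (hβbot : ∀ i, β i ≠ ⊥)
    (hlt : ∀ i, α i < β i)
    (hdisj : Pairwise fun i j => Disjoint
      {x : ℝ | α i < (x : EReal) ∧ (x : EReal) < β i}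
      {x : ℝ | α j < (x : EReal) ∧ (x : EReal) < β j})
    (Ω : Set ℝ) (hΩ : Ω = ⋃ i, {x : ℝ | α i < (x : EReal) ∧ (x : EReal) < β i})
    (hone : Nat.card {i : Fin N // α i = ⊥} + Nat.card {i : Fin N // β i = ⊤} = 1) :
    ¬ ∃ U : ℝ → (Lp ℂ 2 (volume.restrict Ω) ≃ₗᵢ[ℂ] Lp ℂ 2 (volume.restrict Ω)),
      U 0 = LinearIsometryEquiv.refl ℂ (Lp ℂ 2 (volume.restrict Ω)) ∧
      (∀ s t f, U (s + t) f = U s (U t f)) ∧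
      (∀ f, Continuous fun t => U t f) ∧
      (∀ V : Set ℝ, IsOpen V → V ⊆ Ω → ∀ δ : ℝ, 0 < δ →
        (∀ s : ℝ, |s| < δ → (fun x => x + s) '' V ⊆ Ω) →
        ∀ s : ℝ, |s| < δ → ∀ f, ∀ᵐ x ∂(volume.restrict V),
          (U s f : ℝ → ℂ) x = (f : ℝ → ℂ) (x + s)) := by
  rintro ⟨U, hzero, hadd, -, htranslate⟩
  obtain ⟨j, hj, hfinite⟩ := exists_infinite_endpoint_forall_ne_finite hone
  choose a b hab hI using fun i : {i // i ≠ j} =>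
    exists_lt_and_preimage_coe_Ioo_eq_Ioo (hlt i) (hfinite i i.2).1 (hfinite i i.2).2
  have hdecomp : Ω = Real.toEReal ⁻¹' Ioo (α j) (β j) ∪ ⋃ i, Ioo (a i) (b i) := by
    simp_rw [← hI, iUnion_subtype]
    exact hΩ.trans (iSup_split_single _ j)
  have hU : IsLocalTranslationGroup Ω U := ⟨hzero, hadd, htranslate⟩
  exact hU.ne_halfLine_union_iUnion_Ioo (isHalfLine_preimage_coe_Ioo (hlt j) hj) hab hdecomp
end
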